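/- arXiv:math/0412400 — 2 statements merged into one kernel-verified Lean document; each statement's English description precedes it below -/
import Mathlib

section
/- Let n ≥ 1, r ≥ 1, and let (μ_j)_{j ∈ J} be a sequence of Borel probability measures on ℝ^n such that sup_{j ∈ J} ∫ θ_r dμ_j < ∞. Then there is a subsequence (μ_{j_k}) and a Borel probability measure μ on ℝ^n such that ∫ f dμ_{j_k} → ∫ f dμ for every continuous function f : ℝ^n → ℝ such that f/θ_{r−1} is bounded on ℝ^n. -/
open MvPolynomial MeasureTheory Filter Topology

/-- `θ_r(x) = ∑_{k=0}^r ∑_{i=1}^n x_i^{2k}/k!` as a polynomial in `ℝ[x_1,…,x_n]`. -/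
noncomputable def theta (n r : ℕ) : MvPolynomial (Fin n) ℝ :=
  ∑ k ∈ Finset.range (r + 1), ∑ i : Fin n,
    C ((1 : ℝ) / (Nat.factorial k : ℝ)) * X i ^ (2 * k)

/-!
The bound on the integrals of a nonnegative continuous function `W` tending to infinity at infinity
makes the sequence tight, by Markov's inequality, so Prokhorov's theorem gives a weak limit `ν`
along a subsequence; by lower semicontinuity the bound passes to `ν`. If `f = o(W)` at infinity,
then `|f| ≤ ε W + N` for every `ε > 0` and some `N`, so clamping `f` to `[-N, N]` changes its
integrals by at most `ε ∫ W`, uniformly along the sequence, and weak convergence applies to the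
clamped function. For `W = θ_{r+1}` this covers all `f = O(θ_r)`, since `θ_r = o(θ_{r+1})`.
-/

open Asymptotics BoundedContinuousFunction
open scoped ENNReal

lemma abs_sub_clamp_le {a b N : ℝ} (hb : 0 ≤ b) (hN : 0 ≤ N) (h : |a| ≤ b + N) :
    |a - max (-N) (min a N)| ≤ b := by
  grind

section CoerciveWeight

variable {E : Type*} [TopologicalSpace E]

lemma exists_norm_le_mul_add_of_isLittleO_cocompact {F : Type*} [SeminormedAddCommGroup F]
    {f : E → F} {W : E → ℝ} (hf : Continuous f) (hW0 : 0 ≤ W) (hfW : f =o[cocompact E] W)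
    {ε : ℝ} (hε : 0 < ε) : ∃ N, 0 ≤ N ∧ ∀ x, ‖f x‖ ≤ ε * W x + N := by
  obtain ⟨K, hK, hKf⟩ := mem_cocompact.1 (hfW.def hε)
  obtain ⟨N, hN⟩ := hK.exists_bound_of_continuousOn hf.continuousOn
  refine ⟨max N 0, le_max_right N 0, fun x => ?_⟩
  have hεW : 0 ≤ ε * W x := mul_nonneg hε.le (hW0 x)
  by_cases hx : x ∈ K
  · exact (hN x hx).trans ((le_max_left N 0).trans (le_add_of_nonneg_left hεW))
  · have hfx : ‖f x‖ ≤ ε * ‖W x‖ := hKf hx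
    rw [Real.norm_of_nonneg (hW0 x)] at hfx
    exact hfx.trans (le_add_of_nonneg_right (le_max_right N 0))

variable [MeasurableSpace E]

lemma isTightMeasureSet_of_lintegral_le {S : Set (Measure E)} {W : E → ℝ≥0∞} {c : ℝ≥0∞}
    (hW : Measurable W) (hWtop : Tendsto W (cocompact E) (𝓝 ∞)) (hc : c ≠ ∞)
    (hS : ∀ ρ ∈ S, ∫⁻ x, W x ∂ρ ≤ c) : IsTightMeasureSet S := by
  rw [isTightMeasureSet_iff_exists_isCompact_measure_compl_le]
  intro ε hε
  obtain ⟨m, hm⟩ := ENNReal.exists_nat_mul_gt hε.ne' hc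
  have hm0 : (m : ℝ≥0∞) ≠ 0 := left_ne_zero_of_mul hm.ne_bot
  have hmtop : (m : ℝ≥0∞) ≠ ∞ := ENNReal.natCast_ne_top m
  obtain ⟨K, hK, hKW⟩ := mem_cocompact.1 (hWtop.eventually (lt_mem_nhds hmtop.lt_top))
  refine ⟨K, hK, fun ρ hρ => ?_⟩
  calc ρ Kᶜ ≤ ρ {x | m ≤ W x} := measure_mono fun x hx => (show m < W x from hKW hx).le
    _ ≤ (∫⁻ x, W x ∂ρ) / m := meas_ge_le_lintegral_div hW.aemeasurable hm0 hmtop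
    _ ≤ c / m := ENNReal.div_le_div_right (hS ρ hρ) m
    _ ≤ ε := ENNReal.div_le_of_le_mul' hm.le

variable [OpensMeasurableSpace E] {f W : E → ℝ}

lemma exists_boundedContinuousFunction_dist_integral_le (hf : Continuous f) (hW0 : 0 ≤ W)
    (hfW : f =o[cocompact E] W) {ε : ℝ} (hε : 0 < ε) :
    ∃ g : E →ᵇ ℝ, ∀ (ρ : Measure E) [IsFiniteMeasure ρ], Integrable W ρ →
      dist (∫ x, f x ∂ρ) (∫ x, g x ∂ρ) ≤ ε * ∫ x, W x ∂ρ := by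
  obtain ⟨N, hN, hfN⟩ := exists_norm_le_mul_add_of_isLittleO_cocompact hf hW0 hfW hε
  let g : E →ᵇ ℝ := ofNormedAddCommGroup (fun x => max (-N) (min (f x) N)) (by fun_prop) N
    fun x => abs_le.2 ⟨le_max_left _ _, max_le (neg_le_self hN) (min_le_right _ _)⟩
  refine ⟨g, fun ρ _ hWρ => ?_⟩
  have hfρ : Integrable f ρ := ((hWρ.const_mul ε).add (integrable_const N)).mono'
    hf.aestronglyMeasurable (.of_forall hfN)
  have hgρ : Integrable g ρ := g.integrable ρ
  rw [dist_eq_norm, ← integral_sub hfρ hgρ, ← integral_const_mul]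
  exact norm_integral_le_of_norm_le (hWρ.const_mul ε) <| .of_forall fun x =>
    abs_sub_clamp_le (mul_nonneg hε.le (hW0 x)) hN (hfN x)

lemma tendsto_integral_of_isLittleO_cocompact {ι : Type*} {l : Filter ι}
    {μ : ι → ProbabilityMeasure E} {ν : ProbabilityMeasure E} (hμν : Tendsto μ l (𝓝 ν))
    (hW0 : 0 ≤ W) {c : ℝ} (hμ : ∀ j, Integrable W (μ j : Measure E))
    (hc : ∀ j, ∫ x, W x ∂(μ j : Measure E) ≤ c) (hν : Integrable W (ν : Measure E))
    (hf : Continuous f) (hfW : f =o[cocompact E] W) :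
    Tendsto (fun j => ∫ x, f x ∂(μ j : Measure E)) l (𝓝 (∫ x, f x ∂(ν : Measure E))) := by
  rw [Metric.tendsto_nhds]
  intro ε hε
  let M := max c (∫ x, W x ∂(ν : Measure E))
  obtain ⟨δ, hδ, hMδ⟩ := exists_pos_mul_lt (show 0 < ε / 3 by positivity) M
  obtain ⟨g, hg⟩ := exists_boundedContinuousFunction_dist_integral_le hf hW0 hfW hδ
  have hfg (ρ : ProbabilityMeasure E) (hρ : Integrable W (ρ : Measure E))
      (hρM : ∫ x, W x ∂(ρ : Measure E) ≤ M) :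
      dist (∫ x, f x ∂(ρ : Measure E)) (∫ x, g x ∂(ρ : Measure E)) < ε / 3 := calc
    _ ≤ δ * ∫ x, W x ∂(ρ : Measure E) := hg ρ hρ
    _ ≤ δ * M := by gcongr
    _ < ε / 3 := by rwa [mul_comm]
  have hgμν := ProbabilityMeasure.tendsto_iff_forall_integral_tendsto.1 hμν g
  filter_upwards [Metric.tendsto_nhds.1 hgμν (ε / 3) (by positivity)] with j hj
  have hfgμ := hfg (μ j) (hμ j) ((hc j).trans (le_max_left _ _))
  have hfgν := hfg ν hν (le_max_right _ _)
  rw [dist_comm] at hfgν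
  linarith [dist_triangle4 (∫ x, f x ∂(μ j : Measure E)) (∫ x, g x ∂(μ j : Measure E))
    (∫ x, g x ∂(ν : Measure E)) (∫ x, f x ∂(ν : Measure E))]

lemma lintegral_ofReal_le_of_tendsto [HasOuterApproxClosed E] {μ : ℕ → ProbabilityMeasure E}
    {ν : ProbabilityMeasure E} (hμν : Tendsto μ atTop (𝓝 ν)) (hW : Continuous W) (hW0 : 0 ≤ W)
    {c : ℝ≥0∞} (hμ : ∀ j, ∫⁻ x, ENNReal.ofReal (W x) ∂(μ j : Measure E) ≤ c) :
    ∫⁻ x, ENNReal.ofReal (W x) ∂(ν : Measure E) ≤ c :=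
  calc ∫⁻ x, ENNReal.ofReal (W x) ∂(ν : Measure E)
      ≤ liminf (fun j => ∫⁻ x, ENNReal.ofReal (W x) ∂(μ j : Measure E)) atTop :=
        lintegral_le_liminf_lintegral_of_forall_isOpen_measure_le_liminf_measure hW hW0
          fun _ hG => ProbabilityMeasure.le_liminf_measure_open_of_tendsto hμν hG
    _ ≤ c := liminf_le_of_frequently_le' (Frequently.of_forall hμ)

end CoerciveWeight

theorem exists_subseq_weak_convergence_general {E : Type*} [TopologicalSpace E]
    [TopologicalSpace.MetrizableSpace E] [TopologicalSpace.SeparableSpace E] [MeasurableSpace E]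
    [BorelSpace E] {W : E → ℝ} (hW : Continuous W) (hW0 : 0 ≤ W)
    (hWtop : Tendsto W (cocompact E) atTop) (μ : ℕ → Measure E)
    (hprob : ∀ j, IsProbabilityMeasure (μ j)) (hint : ∀ j, Integrable W (μ j)) {c : ℝ}
    (hc : ∀ j, ∫ x, W x ∂(μ j) ≤ c) :
    ∃ φ : ℕ → ℕ, StrictMono φ ∧ ∃ ν : Measure E, IsProbabilityMeasure ν ∧
      ∀ f : E → ℝ, Continuous f → f =o[cocompact E] W →
        Tendsto (fun k => ∫ x, f x ∂(μ (φ k))) atTop (𝓝 (∫ x, f x ∂ν)) := by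
  let P (j : ℕ) : ProbabilityMeasure E := ⟨μ j, hprob j⟩
  have hP (j : ℕ) : ∫⁻ x, ENNReal.ofReal (W x) ∂(P j : Measure E) ≤ ENNReal.ofReal c :=
    (ofReal_integral_eq_lintegral_ofReal (hint j) (.of_forall hW0)).symm.trans_le
      (ENNReal.ofReal_le_ofReal (hc j))
  have htight : IsTightMeasureSet {ρ : Measure E | ∃ p ∈ Set.range P, (p : Measure E) = ρ} := by
    refine isTightMeasureSet_of_lintegral_le (c := ENNReal.ofReal c)
      hW.measurable.ennreal_ofReal (ENNReal.tendsto_ofReal_nhds_top.2 hWtop)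
      ENNReal.ofReal_ne_top ?_
    rintro _ ⟨_, ⟨j, rfl⟩, rfl⟩
    exact hP j
  obtain ⟨ν, -, φ, hφ, hlim⟩ := (isCompact_closure_of_isTightMeasureSet htight).tendsto_subseq
    fun j => subset_closure (Set.mem_range_self j)
  have hν : Integrable W (ν : Measure E) :=
    (lintegral_ofReal_ne_top_iff_integrable hW.aestronglyMeasurable (.of_forall hW0)).1
      ((lintegral_ofReal_le_of_tendsto hlim hW hW0 fun k => hP (φ k)).trans_lt
        ENNReal.ofReal_lt_top).ne
  exact ⟨φ, hφ, ν, inferInstance, fun f hf hfW =>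
    tendsto_integral_of_isLittleO_cocompact hlim hW0 (fun k => hint (φ k)) (fun k => hc (φ k)) hν
      hf hfW⟩

lemma pow_div_factorial_le {ε t : ℝ} (hε : 0 < ε) (ht : 0 ≤ t) (k : ℕ) :
    t ^ k / k.factorial ≤
      ε * (t ^ (k + 1) / (k + 1).factorial) + ((k + 1) / ε) ^ k / k.factorial := by
  rcases le_total t ((k + 1) / ε) with hle | hge
  · exact le_add_of_nonneg_of_le (by positivity) (by gcongr)
  · have hratio : 1 ≤ ε * t / (k + 1) := by
      rwa [one_le_div (by positivity), ← div_le_iff₀' hε]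
    refine le_add_of_le_of_nonneg ?_ (by positivity)
    calc t ^ k / k.factorial ≤ t ^ k / k.factorial * (ε * t / (k + 1)) :=
          le_mul_of_one_le_right (by positivity) hratio
      _ = ε * (t ^ (k + 1) / (k + 1).factorial) := by
          rw [Nat.factorial_succ, pow_succ]
          push_cast
          field_simp

section Theta

variable (n r : ℕ)

lemma eval_theta (x : Fin n → ℝ) :
    eval x (theta n r) = ∑ k ∈ Finset.range (r + 1), ∑ i, (x i ^ 2) ^ k / k.factorial := by
  simp [theta, pow_mul, div_eq_inv_mul]

lemma eval_theta_eq_add_natCast (x : Fin n → ℝ) :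
    eval x (theta n r) =
      ∑ k ∈ Finset.range r, ∑ i, (x i ^ 2) ^ (k + 1) / (k + 1).factorial + n := by
  simp [eval_theta, Finset.sum_range_succ' _ r]

lemma natCast_le_eval_theta (x : Fin n → ℝ) : (n : ℝ) ≤ eval x (theta n r) := by
  rw [eval_theta_eq_add_natCast]
  exact le_add_of_nonneg_left (by positivity)

lemma eval_theta_nonneg (x : Fin n → ℝ) : 0 ≤ eval x (theta n r) :=
  n.cast_nonneg.trans (natCast_le_eval_theta n r x)

lemma exists_eval_theta_le_mul_eval_theta_succ_add {ε : ℝ} (hε : 0 < ε) :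
    ∃ c, ∀ x : Fin n → ℝ, eval x (theta n r) ≤ ε * eval x (theta n (r + 1)) + c := by
  refine ⟨∑ k ∈ Finset.range (r + 1), ∑ _i : Fin n, ((k + 1) / ε) ^ k / k.factorial, fun x => ?_⟩
  calc eval x (theta n r)
      ≤ ∑ k ∈ Finset.range (r + 1), ∑ i, (ε * ((x i ^ 2) ^ (k + 1) / (k + 1).factorial) +
          ((k + 1) / ε) ^ k / k.factorial) := by
        rw [eval_theta]
        gcongr with k _ i _
        exact pow_div_factorial_le hε (sq_nonneg (x i)) k
    _ = ε * ∑ k ∈ Finset.range (r + 1), ∑ i, (x i ^ 2) ^ (k + 1) / (k + 1).factorial +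
          ∑ k ∈ Finset.range (r + 1), ∑ _i : Fin n, ((k + 1) / ε) ^ k / k.factorial := by
        simp only [Finset.sum_add_distrib, Finset.mul_sum]
    _ ≤ ε * eval x (theta n (r + 1)) + _ := by
        rw [eval_theta_eq_add_natCast]
        gcongr
        exact le_add_of_nonneg_right n.cast_nonneg

lemma sq_norm_le_eval_theta_succ (x : Fin n → ℝ) : ‖x‖ ^ 2 ≤ eval x (theta n (r + 1)) := by
  rw [← Real.le_sqrt (norm_nonneg x) (eval_theta_nonneg n (r + 1) x),
    pi_norm_le_iff_of_nonneg (Real.sqrt_nonneg _)]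
  refine fun i => Real.abs_le_sqrt ?_
  calc x i ^ 2 ≤ ∑ i, x i ^ 2 :=
        Finset.single_le_sum (fun i _ => sq_nonneg (x i)) (Finset.mem_univ i)
    _ = ∑ i, (x i ^ 2) ^ 1 / (Nat.factorial 1 : ℝ) := by simp
    _ ≤ ∑ k ∈ Finset.range (r + 2), ∑ i, (x i ^ 2) ^ k / (k.factorial : ℝ) :=
        Finset.single_le_sum (f := fun k => ∑ i, (x i ^ 2) ^ k / (k.factorial : ℝ))
          (fun k _ => by positivity) (Finset.mem_range.2 (by lia))
    _ = eval x (theta n (r + 1)) := (eval_theta n (r + 1) x).symm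

lemma tendsto_eval_theta_succ_cocompact_atTop :
    Tendsto (fun x => eval x (theta n (r + 1))) (cocompact (Fin n → ℝ)) atTop :=
  tendsto_atTop_mono (sq_norm_le_eval_theta_succ n r)
    ((tendsto_pow_atTop two_ne_zero).comp tendsto_norm_cocompact_atTop)

lemma isLittleO_eval_theta_succ :
    (fun x => eval x (theta n r)) =o[cocompact (Fin n → ℝ)] fun x => eval x (theta n (r + 1)) := by
  rw [isLittleO_iff]
  intro ε hε
  obtain ⟨c, hc⟩ := exists_eval_theta_le_mul_eval_theta_succ_add n r (half_pos hε)
  have hlarge := (tendsto_eval_theta_succ_cocompact_atTop n r).eventually_ge_atTop (c / (ε / 2))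
  filter_upwards [hlarge] with x hx
  rw [div_le_iff₀' (half_pos hε)] at hx
  rw [Real.norm_of_nonneg (eval_theta_nonneg n r x),
    Real.norm_of_nonneg (eval_theta_nonneg n (r + 1) x)]
  linarith [hc x]

variable {n r}

lemma isBigO_eval_theta_of_abs_div_le (hn : 1 ≤ n) {f : (Fin n → ℝ) → ℝ} {B : ℝ}
    (hB : ∀ x, |f x / eval x (theta n r)| ≤ B) (l : Filter (Fin n → ℝ)) :
    f =O[l] fun x => eval x (theta n r) := by
  have hpos (x : Fin n → ℝ) : 0 < eval x (theta n r) :=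
    (Nat.cast_pos.2 hn).trans_le (natCast_le_eval_theta n r x)
  exact (isBigO_iff_div_isBoundedUnder (.of_forall fun x hx => absurd hx (hpos x).ne')).2
    (isBoundedUnder_of ⟨B, hB⟩)

end Theta

theorem exists_subseq_weak_convergence (n : ℕ) (hn : 1 ≤ n) (r : ℕ) (hr : 1 ≤ r)
    (μ : ℕ → Measure (Fin n → ℝ)) (hprob : ∀ j, IsProbabilityMeasure (μ j))
    (hint : ∀ j, Integrable (fun x => eval x (theta n r)) (μ j))
    (C₀ : ℝ) (hC : ∀ j, (∫ x, eval x (theta n r) ∂(μ j)) ≤ C₀) :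
    ∃ φ : ℕ → ℕ, StrictMono φ ∧
      ∃ ν : Measure (Fin n → ℝ), IsProbabilityMeasure ν ∧
        ∀ f : (Fin n → ℝ) → ℝ, Continuous f →
          (∃ B : ℝ, ∀ x : Fin n → ℝ, |f x / eval x (theta n (r - 1))| ≤ B) →
          Tendsto (fun k => ∫ x, f x ∂(μ (φ k))) atTop (𝓝 (∫ x, f x ∂ν)) := by
  obtain ⟨s, rfl⟩ := Nat.exists_eq_add_of_le' hr
  obtain ⟨φ, hφ, ν, hν, hlim⟩ := exists_subseq_weak_convergence_general
    (continuous_eval (theta n (s + 1))) (eval_theta_nonneg n (s + 1))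
    (tendsto_eval_theta_succ_cocompact_atTop n s) μ hprob hint hC
  exact ⟨φ, hφ, ν, hν, fun f hf ⟨_, hB⟩ => hlim f hf
    ((isBigO_eval_theta_of_abs_div_le hn hB _).trans_isLittleO (isLittleO_eval_theta_succ n s))⟩
end

section
/- Let g_1,…,g_m ∈ ℝ[x_1,…,x_n], V = {x ∈ ℝ^n : g_j(x) = 0 for j = 1,…,m}, and suppose f ∈ ℝ[x_1,…,x_n] has a global minimizer x* ∈ V on V with f(x*) = f* and ‖x*‖_∞ ≤ ρ. Let η > 0 and choose ε > 0 with ε ≤ η·(n·e^{ρ²})^{-1}. Then for all sufficiently large r (with 2r ≥ max(deg f, deg g_j^2)), the infimum inf𝒬_{εr} of L_y(f + ε·θ_r) over all y : {α ∈ ℕ^n : |α| ≤ 2r} → ℝ with y_0 = 1, M_r(y) positive semidefinite, and L_y(g_j^2) ≤ 0 for all j, satisfies f* ≤ inf𝒬_{εr} ≤ f* + η. -/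
open MvPolynomial MeasureTheory Filter Topology

/-- A polynomial is a sum of squares if it is a finite sum of squares of polynomials. -/
def IsSOS {n : ℕ} (p : MvPolynomial (Fin n) ℝ) : Prop :=
  ∃ (k : ℕ) (q : Fin k → MvPolynomial (Fin n) ℝ), p = ∑ i, q i ^ 2

/-- The linear functional `L_y` sending `p = ∑_α p_α x^α` to `∑_α p_α y_α`. -/
noncomputable def Ly {n : ℕ} (y : (Fin n →₀ ℕ) → ℝ) (p : MvPolynomial (Fin n) ℝ) : ℝ :=
  ∑ α ∈ p.support, coeff α p * y α

/-- The finite set of multi-indices `α ∈ ℕ^n` with `|α| ≤ r`. -/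
noncomputable def degLE (n r : ℕ) : Finset (Fin n →₀ ℕ) :=
  (Finset.Iic (Finsupp.equivFunOnFinite.symm fun _ : Fin n => r)).filter
    fun α => (α.sum fun _ e => e) ≤ r

/-- The moment matrix `M_r(y)`, indexed by multi-indices `|α| ≤ r`, `|β| ≤ r`, with
entries `y_{α+β}`. -/
noncomputable def momentMatrix (n r : ℕ) (y : (Fin n →₀ ℕ) → ℝ) :
    Matrix ↥(degLE n r) ↥(degLE n r) ℝ :=
  fun α β => y (α.1 + β.1)

/-- The optimal value `inf 𝒬_{εr}` of the SDP relaxation. -/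
noncomputable def infQ (n m : ℕ) (g : Fin m → MvPolynomial (Fin n) ℝ)
    (f : MvPolynomial (Fin n) ℝ) (ε : ℝ) (r : ℕ) : ℝ :=
  sInf {v | ∃ y : (Fin n →₀ ℕ) → ℝ, y 0 = 1 ∧ (momentMatrix n r y).PosSemidef ∧
    (∀ j, Ly y ((g j) ^ 2) ≤ 0) ∧ v = Ly y (f + C ε * theta n r)}

/-!
Write `L` for the functional `L_y` of a feasible `y`. Positivity of the moment matrix on monomials
`x ^ α` gives `|L (x ^ α)| ≤ √(L θ_r) √|α|!`, so `L f + ε L θ_r < f*` bounds `L θ_r` independently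
of `r`. If this happened for arbitrarily large `r`, an ultrafilter limit would be a functional that
is nonnegative on squares, has moments growing like those of a Gaussian measure, is nonpositive on
every `g_j ^ 2`, and takes a value at most `f* - ε n` at `f`.

Such a limit `L` is nonnegative on nonnegative polynomials. By its moment growth it extends to an
algebra of entire power series containing `s = R sin (x_i / R)` and `c = R cos (x_i / R)`, and there
`R ± s = ((R ± s) ^ 2 + c ^ 2) / (2 R)` are sums of squares. Expanding a positive polynomial in the
Bernstein basis of `[-R, R] ^ n` shows that its value at the `R sin (x_i / R)` is a sum of squares,
and `R → ∞` gives the claim. Since `f - f*` is nonnegative on `V`, for every `δ > 0` the polynomial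
`f - f* + δ (1 + (f - f*) ^ 2 + ∑ x_i ^ 2) + N ∑ g_j ^ 2` is nonnegative for `N` large, so
`L f ≥ f*`: a contradiction. The upper bound is the value of the relaxation at the moments of the
Dirac measure at `x*`.
-/

section Bernstein

theorem abs_prod_sub_prod_le_sum {ι : Type*} (s : Finset ι) (a b : ι → ℝ)
    (ha : ∀ i ∈ s, a i ∈ Set.Icc 0 1) (hb : ∀ i ∈ s, b i ∈ Set.Icc 0 1) :
    |∏ i ∈ s, a i - ∏ i ∈ s, b i| ≤ ∑ i ∈ s, |a i - b i| := by
  classical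
  induction s using Finset.induction_on with
  | empty => simp
  | insert i s hi ih =>
    rw [Finset.forall_mem_insert] at ha hb
    have ha_prod : |∏ j ∈ s, a j| ≤ 1 := by
      rw [Finset.abs_prod]
      exact Finset.prod_le_one (fun _ _ => abs_nonneg _) fun j hj =>
        abs_le.2 ⟨by linarith [(ha.2 j hj).1], (ha.2 j hj).2⟩
    have hb_abs : |b i| ≤ 1 := abs_le.2 ⟨by linarith [hb.1.1], hb.1.2⟩
    rw [Finset.prod_insert hi, Finset.prod_insert hi, Finset.sum_insert hi]
    calc |a i * ∏ j ∈ s, a j - b i * ∏ j ∈ s, b j|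
        = |(a i - b i) * ∏ j ∈ s, a j + b i * (∏ j ∈ s, a j - ∏ j ∈ s, b j)| := by ring_nf
      _ ≤ |a i - b i| * |∏ j ∈ s, a j| + |b i| * |∏ j ∈ s, a j - ∏ j ∈ s, b j| := by
          rw [← abs_mul, ← abs_mul]
          exact abs_add_le _ _
      _ ≤ |a i - b i| * 1 + 1 * ∑ j ∈ s, |a j - b j| := by
          gcongr
          exact ih ha.2 hb.2
      _ = |a i - b i| + ∑ j ∈ s, |a j - b j| := by ring

/-- The coefficient of `bernsteinPolynomial ℝ k v` in the expansion of the monomial `X ^ j`, for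
`j ≤ k`. -/
noncomputable def bernsteinCoeff (k v j : ℕ) : ℝ :=
  v.choose j / k.choose j

theorem bernsteinCoeff_eq_prod (k v j : ℕ) :
    bernsteinCoeff k v j = ∏ i ∈ Finset.range j, ((v - i : ℕ) : ℝ) / (k - i : ℕ) := by
  have hj : (j.factorial : ℝ) ≠ 0 := by positivity
  rw [bernsteinCoeff, ← mul_div_mul_left _ _ hj, Finset.prod_div_distrib]
  congr 1 <;>
  · rw [← Nat.cast_mul, ← Nat.descFactorial_eq_factorial_mul_choose,
      Nat.descFactorial_eq_prod_range, Nat.cast_prod]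

theorem natCast_div_mem_Icc {v k : ℕ} (hv : v ≤ k) : (v : ℝ) / k ∈ Set.Icc (0 : ℝ) 1 :=
  ⟨by positivity, div_le_one_of_le₀ (by exact_mod_cast hv) (by positivity)⟩

theorem bernsteinCoeff_mem_Icc {k v : ℕ} (hv : v ≤ k) (j : ℕ) :
    bernsteinCoeff k v j ∈ Set.Icc (0 : ℝ) 1 :=
  natCast_div_mem_Icc (Nat.choose_le_choose j hv)

theorem abs_natSub_div_natSub_sub_div_le {k v i : ℕ} (hv : v ≤ k) (hi : i < k) :
    |((v - i : ℕ) : ℝ) / (k - i : ℕ) - v / k| ≤ i / (k - i : ℕ) := by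
  have hki : (0 : ℝ) < k - i := sub_pos.2 (by exact_mod_cast hi)
  have hk : (0 : ℝ) < k := by linarith [i.cast_nonneg (α := ℝ)]
  obtain ⟨hvk_nonneg, hvk_le⟩ := natCast_div_mem_Icc hv
  rw [Nat.cast_sub hi.le]
  rcases le_total i v with hiv | hiv
  · rw [Nat.cast_sub hiv]
    have hdiff : ((v : ℝ) - i) / (k - i) - v / k = -((i / (k - i)) * (1 - v / k)) := by
      field_simp
      ring
    rw [hdiff, abs_neg, abs_of_nonneg (mul_nonneg (by positivity) (by linarith))]
    exact mul_le_of_le_one_right (by positivity) (by linarith)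
  · rw [Nat.sub_eq_zero_of_le hiv, Nat.cast_zero, zero_div, zero_sub, abs_neg,
      abs_of_nonneg hvk_nonneg]
    have : (v : ℝ) ≤ i := by exact_mod_cast hiv
    gcongr
    linarith [i.cast_nonneg (α := ℝ)]

theorem abs_bernsteinCoeff_sub_pow_le {k v j : ℕ} (hv : v ≤ k) (hj : j < k) :
    |bernsteinCoeff k v j - (v / k : ℝ) ^ j| ≤ (j : ℝ) ^ 2 / (k - j : ℕ) := by
  rw [bernsteinCoeff_eq_prod, ← Finset.card_range j, ← Finset.prod_const, Finset.card_range]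
  calc _ ≤ ∑ i ∈ Finset.range j, |((v - i : ℕ) : ℝ) / (k - i : ℕ) - v / k| :=
        abs_prod_sub_prod_le_sum _ _ _
          (fun i _ => natCast_div_mem_Icc (Nat.sub_le_sub_right hv i))
          fun _ _ => natCast_div_mem_Icc hv
    _ ≤ ∑ _i ∈ Finset.range j, (j : ℝ) / (k - j : ℕ) := by
        refine Finset.sum_le_sum fun i hi => ?_
        rw [Finset.mem_range] at hi
        refine (abs_natSub_div_natSub_sub_div_le hv (hi.trans hj)).trans ?_
        have : 0 < k - j := Nat.sub_pos_of_lt hj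
        gcongr
    _ = (j : ℝ) ^ 2 / (k - j : ℕ) := by
        rw [Finset.sum_const, Finset.card_range, nsmul_eq_mul, ← mul_div_assoc, sq]

theorem eventually_abs_bernsteinCoeff_sub_pow_le (j : ℕ) {δ : ℝ} (hδ : 0 < δ) :
    ∀ᶠ k : ℕ in atTop, ∀ v ≤ k, |bernsteinCoeff k v j - (v / k : ℝ) ^ j| ≤ δ := by
  have hlim : Tendsto (fun k : ℕ => (j : ℝ) ^ 2 / (k - j : ℕ)) atTop (𝓝 0) :=
    tendsto_const_nhds.div_atTop (tendsto_natCast_atTop_atTop.comp (tendsto_sub_atTop_nat j))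
  filter_upwards [hlim.eventually_le_const hδ, eventually_gt_atTop j] with k hk hjk v hv
  exact (abs_bernsteinCoeff_sub_pow_le hv hjk).trans hk

variable {A : Type*} [CommRing A] [Algebra ℝ A]

theorem pow_eq_sum_bernsteinCoeff_smul (x : A) {k j : ℕ} (hj : j ≤ k) :
    x ^ j = ∑ v ∈ Finset.range (k + 1),
      bernsteinCoeff k v j • Polynomial.aeval x (bernsteinPolynomial ℝ k v) := by
  obtain ⟨d, rfl⟩ := Nat.exists_eq_add_of_le hj
  rw [add_assoc, Finset.sum_range_add, Finset.sum_eq_zero, zero_add]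
  · have hbinom : x ^ j = x ^ j * (x + (1 - x)) ^ d := by simp
    rw [hbinom, add_pow, Finset.mul_sum]
    refine Finset.sum_congr rfl fun l _ => ?_
    have hchoose : bernsteinCoeff (j + d) (j + l) j * (j + d).choose (j + l) = d.choose l := by
      have h := Nat.choose_mul (n := j + d) (Nat.le_add_right j l)
      rw [Nat.add_sub_cancel_left, Nat.add_sub_cancel_left] at h
      have hpos : ((j + d).choose j : ℝ) ≠ 0 := by
        exact_mod_cast (Nat.choose_pos hj).ne'
      rw [bernsteinCoeff, div_mul_eq_mul_div, div_eq_iff hpos]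
      exact_mod_cast by linarith
    rw [← map_natCast (algebraMap ℝ A) (d.choose l), ← hchoose]
    simp only [bernsteinPolynomial, map_mul, map_pow, map_sub, map_one, Polynomial.aeval_X,
      map_natCast, Algebra.smul_def, Nat.add_sub_add_left, pow_add]
    ring
  · intro v hv
    simp [bernsteinCoeff, Nat.choose_eq_zero_of_lt (Finset.mem_range.1 hv)]

variable {σ : Type*}

/-- The coefficient of `∏ i, bernsteinPolynomial ℝ k (v i)` (in the variables `X i`) in the
expansion of `Q`, for `Q` of degree at most `k` in each variable. -/
noncomputable def mvBernsteinCoeff [Fintype σ] (k : ℕ) (v : σ → ℕ) (Q : MvPolynomial σ ℝ) : ℝ :=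
  ∑ α ∈ Q.support, coeff α Q * ∏ i, bernsteinCoeff k (v i) (α i)

theorem aeval_eq_sum_mvBernsteinCoeff_smul [Fintype σ] [DecidableEq σ] (a : σ → A)
    (Q : MvPolynomial σ ℝ) {k : ℕ} (hk : Q.totalDegree ≤ k) :
    aeval a Q = ∑ v ∈ Fintype.piFinset fun _ : σ => Finset.range (k + 1),
      mvBernsteinCoeff k v Q • ∏ i, Polynomial.aeval (a i) (bernsteinPolynomial ℝ k (v i)) := by
  have hmonomial : ∀ α ∈ Q.support, ∏ i, a i ^ α i =
      ∑ v ∈ Fintype.piFinset fun _ : σ => Finset.range (k + 1),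
        (∏ i, bernsteinCoeff k (v i) (α i)) •
          ∏ i, Polynomial.aeval (a i) (bernsteinPolynomial ℝ k (v i)) := by
    intro α hα
    have hdeg : ∀ i, α i ≤ k := fun i =>
      ((Finsupp.le_degree i α).trans (le_totalDegree hα)).trans hk
    simp only [Algebra.smul_def, map_prod, ← Finset.prod_mul_distrib]
    simp only [← Algebra.smul_def]
    rw [Finset.sum_prod_piFinset (Finset.range (k + 1)) fun i l => bernsteinCoeff k l (α i) •
        Polynomial.aeval (a i) (bernsteinPolynomial ℝ k l)]
    exact Finset.prod_congr rfl fun i _ => pow_eq_sum_bernsteinCoeff_smul (a i) (hdeg i)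
  rw [aeval_def, eval₂_eq']
  simp only [mvBernsteinCoeff, Finset.sum_smul, mul_smul]
  rw [Finset.sum_comm]
  refine Finset.sum_congr rfl fun α hα => ?_
  rw [hmonomial α hα, ← Algebra.smul_def, Finset.smul_sum]

theorem eventually_abs_mvBernsteinCoeff_sub_eval_le [Fintype σ] (Q : MvPolynomial σ ℝ) {δ : ℝ}
    (hδ : 0 < δ) :
    ∀ᶠ k : ℕ in atTop, ∀ v : σ → ℕ, (∀ i, v i ≤ k) →
      |mvBernsteinCoeff k v Q - eval (fun i => (v i / k : ℝ)) Q| ≤ δ := by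
  set M : ℝ := ∑ α ∈ Q.support, |coeff α Q| * Fintype.card σ
  have hM : 0 ≤ M := Finset.sum_nonneg fun _ _ => by positivity
  have hcoeff : ∀ᶠ k : ℕ in atTop, ∀ α ∈ Q.support, ∀ i, ∀ v ≤ k,
      |bernsteinCoeff k v (α i) - (v / k : ℝ) ^ α i| ≤ δ / (M + 1) :=
    (eventually_all_finset _).2 fun α _ => eventually_all.2 fun i =>
      eventually_abs_bernsteinCoeff_sub_pow_le (α i) (by positivity)
  filter_upwards [hcoeff] with k hk v hv
  rw [mvBernsteinCoeff, eval_eq', ← Finset.sum_sub_distrib]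
  calc _ ≤ ∑ α ∈ Q.support, |coeff α Q| *
          |∏ i, bernsteinCoeff k (v i) (α i) - ∏ i, (v i / k : ℝ) ^ α i| := by
        simp only [← mul_sub, ← abs_mul]
        exact Finset.abs_sum_le_sum_abs _ _
    _ ≤ ∑ α ∈ Q.support, |coeff α Q| * ∑ _i : σ, δ / (M + 1) := by
        gcongr with α hα
        refine (abs_prod_sub_prod_le_sum _ _ _ (fun i _ => bernsteinCoeff_mem_Icc (hv i) _)
          fun i _ => ?_).trans (Finset.sum_le_sum fun i _ => hk α hα i (v i) (hv i))
        obtain ⟨h0, h1⟩ := natCast_div_mem_Icc (hv i)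
        exact ⟨pow_nonneg h0 _, pow_le_one₀ h0 h1⟩
    _ = M * (δ / (M + 1)) := by
        simp only [Finset.sum_const, Finset.card_univ, nsmul_eq_mul, M, Finset.sum_mul, mul_assoc]
    _ ≤ δ := by
        rw [← mul_div_assoc, div_le_iff₀ (by positivity)]
        nlinarith

theorem aeval_mem_of_pos_on_unitCube [Finite σ] (S : Subsemiring A)
    (hS : ∀ c : ℝ, 0 ≤ c → algebraMap ℝ A c ∈ S) {a : σ → A} (ha : ∀ i, a i ∈ S)
    (ha' : ∀ i, 1 - a i ∈ S) {Q : MvPolynomial σ ℝ} {δ : ℝ} (hδ : 0 < δ)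
    (hQ : ∀ x : σ → ℝ, (∀ i, x i ∈ Set.Icc 0 1) → δ ≤ eval x Q) : aeval a Q ∈ S := by
  classical
  have := Fintype.ofFinite σ
  obtain ⟨k, hk, hdeg⟩ := ((eventually_abs_mvBernsteinCoeff_sub_eval_le Q hδ).and
    (eventually_ge_atTop Q.totalDegree)).exists
  rw [aeval_eq_sum_mvBernsteinCoeff_smul a Q hdeg]
  refine S.sum_mem fun v hv => ?_
  have hvk : ∀ i, v i ≤ k := by simpa [Nat.lt_succ_iff] using hv
  rw [Algebra.smul_def]
  refine S.mul_mem (hS _ ?_) (S.prod_mem fun i _ => ?_)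
  · have := hQ _ fun i => natCast_div_mem_Icc (hvk i)
    linarith [(abs_le.1 (hk v hvk)).1]
  · simp only [bernsteinPolynomial, map_mul, map_pow, map_sub, map_one, Polynomial.aeval_X,
      map_natCast]
    exact S.mul_mem (S.mul_mem (natCast_mem S _) (S.pow_mem (ha i) _)) (S.pow_mem (ha' i) _)

theorem aeval_mem_of_pos_on_cube [Finite σ] (S : Subsemiring A)
    (hS : ∀ c : ℝ, 0 ≤ c → algebraMap ℝ A c ∈ S) {R : ℝ} (hR : 0 < R) {a : σ → A}
    (ha : ∀ i, algebraMap ℝ A R + a i ∈ S) (ha' : ∀ i, algebraMap ℝ A R - a i ∈ S)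
    {Q : MvPolynomial σ ℝ} {δ : ℝ} (hδ : 0 < δ)
    (hQ : ∀ x : σ → ℝ, (∀ i, x i ∈ Set.Icc (-R) R) → δ ≤ eval x Q) : aeval a Q ∈ S := by
  have hR' : 0 ≤ (2 * R)⁻¹ := by positivity
  let b : σ → A := fun i => algebraMap ℝ A (2 * R)⁻¹ * (algebraMap ℝ A R + a i)
  have hscale : algebraMap ℝ A (2 * R)⁻¹ * algebraMap ℝ A (2 * R) = 1 := by
    rw [← map_mul, inv_mul_cancel₀ (by positivity), map_one]
  have hb' : ∀ i, 1 - b i = algebraMap ℝ A (2 * R)⁻¹ * (algebraMap ℝ A R - a i) := fun i => by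
    rw [← hscale]
    simp only [b, two_mul, map_add]
    ring
  have haff : aeval a Q = aeval b (aeval (fun i => C (2 * R) * X i - C R) Q) := by
    rw [← AlgHom.comp_apply, comp_aeval]
    congr 2
    funext i
    rw [map_sub, map_mul, aeval_X, algHom_C, algHom_C]
    linear_combination (-(algebraMap ℝ A R + a i)) * hscale
  rw [haff]
  refine aeval_mem_of_pos_on_unitCube S hS (fun i => S.mul_mem (hS _ hR') (ha i))
    (fun i => hb' i ▸ S.mul_mem (hS _ hR') (ha' i)) hδ fun x hx => ?_
  rw [← coe_aeval_eq_eval, RingHom.coe_coe, ← AlgHom.comp_apply, comp_aeval]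
  refine hQ _ fun i => ?_
  simp only [map_sub, map_mul, aeval_X, algHom_C, Algebra.algebraMap_self, RingHom.id_apply]
  obtain ⟨h0, h1⟩ := hx i
  constructor <;> nlinarith

end Bernstein

section EntireSeries

/-- The weight `√d! t ^ d`, to be summed against the coefficients of degree `d` of a power
series. -/
noncomputable def gaussianWeight (t : ℝ) (d : ℕ) : ℝ :=
  √d.factorial * t ^ d

theorem gaussianWeight_nonneg {t : ℝ} (ht : 0 ≤ t) (d : ℕ) : 0 ≤ gaussianWeight t d := by
  unfold gaussianWeight
  positivity

theorem gaussianWeight_add_le {t : ℝ} (ht : 0 ≤ t) (d e : ℕ) :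
    gaussianWeight t (d + e) ≤ gaussianWeight (2 * t) d * gaussianWeight (2 * t) e := by
  have hfactorial : ((d + e).factorial : ℝ) ≤ (2 ^ (d + e)) ^ 2 * (d.factorial * e.factorial) := by
    have hchoose : (d + e).choose e ≤ (2 ^ (d + e)) ^ 2 :=
      (Nat.choose_le_two_pow _ _).trans (Nat.le_self_pow two_ne_zero _)
    rw [← Nat.add_choose_mul_factorial_mul_factorial, mul_assoc]
    exact_mod_cast Nat.mul_le_mul_right _ hchoose
  have hsqrt := Real.sqrt_le_sqrt hfactorial
  rw [Real.sqrt_mul (by positivity), Real.sqrt_sq (by positivity),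
    Real.sqrt_mul (by positivity)] at hsqrt
  calc gaussianWeight t (d + e)
      ≤ 2 ^ (d + e) * (√d.factorial * √e.factorial) * t ^ (d + e) := by
        unfold gaussianWeight
        gcongr
    _ = gaussianWeight (2 * t) d * gaussianWeight (2 * t) e := by
        simp only [gaussianWeight]
        ring

theorem summable_inv_factorial_mul_gaussianWeight (t : ℝ) :
    Summable fun d : ℕ => (d.factorial : ℝ)⁻¹ * gaussianWeight t d := by
  have hratio : ∀ d : ℕ, ((d + 1).factorial : ℝ)⁻¹ * gaussianWeight t (d + 1) =
      t / √((d : ℝ) + 1) * ((d.factorial : ℝ)⁻¹ * gaussianWeight t d) := fun d => by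
    have hsqrt : ((d : ℝ) + 1) = √((d : ℝ) + 1) * √((d : ℝ) + 1) :=
      (Real.mul_self_sqrt (by positivity)).symm
    rw [gaussianWeight, Nat.factorial_succ, Nat.cast_mul, Nat.cast_succ,
      Real.sqrt_mul (by positivity), mul_inv, gaussianWeight]
    nth_rewrite 1 [hsqrt]
    field_simp
    exact pow_succ' t d
  have hlim : Tendsto (fun d : ℕ => ‖t / √((d : ℝ) + 1)‖) atTop (𝓝 0) := by
    rw [← norm_zero (E := ℝ)]
    exact (tendsto_const_nhds.div_atTop (Real.tendsto_sqrt_atTop.comp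
      (tendsto_atTop_add_const_right _ _ tendsto_natCast_atTop_atTop))).norm
  refine summable_of_ratio_norm_eventually_le one_half_lt_one ?_
  filter_upwards [hlim.eventually_le_const one_half_pos] with d hd
  rw [hratio, norm_mul]
  exact mul_le_mul_of_nonneg_right hd (norm_nonneg _)

variable {σ : Type*}

theorem summable_gaussianWeight_coeff_mul {f g : MvPowerSeries σ ℝ}
    (hf : ∀ t, 0 ≤ t → Summable fun α => |f.coeff α| * gaussianWeight t α.degree)
    (hg : ∀ t, 0 ≤ t → Summable fun α => |g.coeff α| * gaussianWeight t α.degree)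
    {t : ℝ} (ht : 0 ≤ t) :
    Summable fun α => |(f * g).coeff α| * gaussianWeight t α.degree := by
  classical
  have ht2 : 0 ≤ 2 * t := by positivity
  let w (h : MvPowerSeries σ ℝ) (α : σ →₀ ℕ) : ℝ := |h.coeff α| * gaussianWeight (2 * t) α.degree
  have hw : ∀ h, 0 ≤ w h := fun h α => mul_nonneg (abs_nonneg _) (gaussianWeight_nonneg ht2 _)
  have hfg : Summable fun p : (σ →₀ ℕ) × (σ →₀ ℕ) => w f p.1 * w g p.2 :=
    Summable.mul_of_nonneg (hf _ ht2) (hg _ ht2) (hw f) (hw g)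
  refine Summable.of_nonneg_of_le
    (fun α => mul_nonneg (abs_nonneg _) (gaussianWeight_nonneg ht _)) (fun γ => ?_)
    (summable_sum_mul_antidiagonal_of_summable_mul hfg)
  rw [MvPowerSeries.coeff_mul]
  calc |∑ p ∈ Finset.HasAntidiagonal.antidiagonal γ, f.coeff p.1 * g.coeff p.2| *
        gaussianWeight t γ.degree
      ≤ (∑ p ∈ Finset.HasAntidiagonal.antidiagonal γ, |f.coeff p.1 * g.coeff p.2|) *
          gaussianWeight t γ.degree :=
        mul_le_mul_of_nonneg_right (Finset.abs_sum_le_sum_abs _ _) (gaussianWeight_nonneg ht _)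
    _ = ∑ p ∈ Finset.HasAntidiagonal.antidiagonal γ,
          |f.coeff p.1 * g.coeff p.2| * gaussianWeight t γ.degree := Finset.sum_mul _ _ _
    _ ≤ _ := by
        refine Finset.sum_le_sum fun p hp => ?_
        simp only [w]
        rw [← Finset.HasAntidiagonal.mem_antidiagonal.1 hp, map_add, abs_mul, mul_mul_mul_comm]
        exact mul_le_mul_of_nonneg_left (gaussianWeight_add_le ht _ _) (by positivity)

theorem summable_gaussianWeight_coeff_coe (P : MvPolynomial σ ℝ) (t : ℝ) :
    Summable fun α => |(P : MvPowerSeries σ ℝ).coeff α| * gaussianWeight t α.degree := by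
  refine summable_of_ne_finset_zero (s := P.support) fun α hα => ?_
  rw [coeff_coe, notMem_support_iff.1 hα, abs_zero, zero_mul]

variable (σ) in
/-- The algebra of power series with `∑_α |f_α| √|α|! t ^ |α| < ∞` for all `t`. These are the
entire functions of order two and minimal type: every functional on polynomials whose moments grow
like those of a Gaussian measure extends to them, and they include `sin` and `cos`. -/
noncomputable def minimalGaussianType : Subalgebra ℝ (MvPowerSeries σ ℝ) where
  carrier := {f | ∀ t, 0 ≤ t → Summable fun α => |f.coeff α| * gaussianWeight t α.degree}
  mul_mem' hf hg _ ht := summable_gaussianWeight_coeff_mul hf hg ht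
  add_mem' {f g} hf hg t ht := by
    refine Summable.of_nonneg_of_le
      (fun α => mul_nonneg (abs_nonneg _) (gaussianWeight_nonneg ht _)) (fun α => ?_)
      ((hf t ht).add (hg t ht))
    rw [map_add, ← add_mul]
    exact mul_le_mul_of_nonneg_right (abs_add_le _ _) (gaussianWeight_nonneg ht _)
  algebraMap_mem' c t _ := by
    simpa only [coe_C, MvPowerSeries.algebraMap_apply, Algebra.algebraMap_self, RingHom.id_apply]
      using summable_gaussianWeight_coeff_coe (C c) t

theorem coe_mem_minimalGaussianType (P : MvPolynomial σ ℝ) :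
    (P : MvPowerSeries σ ℝ) ∈ minimalGaussianType σ :=
  fun t _ => summable_gaussianWeight_coeff_coe P t

theorem subst_X_mem_minimalGaussianType (i : σ) {f : PowerSeries ℝ}
    (hf : ∀ d, |f.coeff d| ≤ (d.factorial : ℝ)⁻¹) :
    f.subst (MvPowerSeries.X i : MvPowerSeries σ ℝ) ∈ minimalGaussianType σ := by
  classical
  intro t ht
  rw [← (Finsupp.single_injective i).summable_iff]
  · refine Summable.of_nonneg_of_le
      (fun d => mul_nonneg (abs_nonneg _) (gaussianWeight_nonneg ht _)) (fun d => ?_)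
      (summable_inv_factorial_mul_gaussianWeight t)
    simp only [Function.comp_apply, PowerSeries.coeff_subst_single, Finsupp.single_eq_same,
      if_true, Finsupp.degree_single]
    exact mul_le_mul_of_nonneg_right (hf d) (gaussianWeight_nonneg ht _)
  · intro α hα
    have hne : α ≠ Finsupp.single i (α i) := fun h => hα ⟨α i, h.symm⟩
    rw [PowerSeries.coeff_subst_single, if_neg hne, abs_zero, zero_mul]

theorem abs_coeff_mul_le {f g F G : MvPowerSeries σ ℝ} (hf : ∀ α, |f.coeff α| ≤ F.coeff α)
    (hg : ∀ α, |g.coeff α| ≤ G.coeff α) (α : σ →₀ ℕ) :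
    |(f * g).coeff α| ≤ (F * G).coeff α := by
  classical
  rw [MvPowerSeries.coeff_mul, MvPowerSeries.coeff_mul]
  refine (Finset.abs_sum_le_sum_abs _ _).trans (Finset.sum_le_sum fun p _ => ?_)
  rw [abs_mul]
  exact mul_le_mul (hf _) (hg _) (abs_nonneg _) ((abs_nonneg _).trans (hf _))

theorem exists_abs_coeff_aeval_le (P : MvPolynomial σ ℝ) {G : σ → MvPowerSeries σ ℝ}
    (hG : ∀ i, G i ∈ minimalGaussianType σ) :
    ∃ F ∈ minimalGaussianType σ, ∀ a : σ → MvPowerSeries σ ℝ,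
      (∀ i α, |(a i).coeff α| ≤ (G i).coeff α) → ∀ α, |(aeval a P).coeff α| ≤ F.coeff α := by
  induction P using MvPolynomial.induction_on with
  | C c =>
    refine ⟨_, coe_mem_minimalGaussianType (C |c|), fun a _ α => le_of_eq ?_⟩
    classical
    rw [algHom_C, MvPowerSeries.algebraMap_apply, Algebra.algebraMap_self, RingHom.id_apply, coe_C,
      MvPowerSeries.coeff_C, MvPowerSeries.coeff_C, apply_ite abs, abs_zero]
  | add P Q hP hQ =>
    obtain ⟨F, hF, hFP⟩ := hP
    obtain ⟨F', hF', hFQ⟩ := hQ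
    refine ⟨F + F', add_mem hF hF', fun a ha α => ?_⟩
    rw [map_add, map_add, map_add]
    exact (abs_add_le _ _).trans (add_le_add (hFP a ha α) (hFQ a ha α))
  | mul_X P i hP =>
    obtain ⟨F, hF, hFP⟩ := hP
    refine ⟨F * G i, mul_mem hF (hG i), fun a ha α => ?_⟩
    rw [map_mul, aeval_X]
    exact abs_coeff_mul_le (hFP a ha) (ha i) α

theorem tendsto_coeff_aeval {ι : Type*} {l : Filter ι} {a : ι → σ → MvPowerSeries σ ℝ}
    (ha : ∀ i α, Tendsto (fun k => (a k i).coeff α) l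
      (𝓝 ((MvPowerSeries.X i : MvPowerSeries σ ℝ).coeff α))) (P : MvPolynomial σ ℝ) :
    ∀ α, Tendsto (fun k => (aeval (a k) P).coeff α) l (𝓝 (coeff α P)) := by
  classical
  induction P using MvPolynomial.induction_on with
  | C c =>
    intro α
    simp only [algHom_C, ← coeff_coe, coe_C, MvPowerSeries.algebraMap_apply,
      Algebra.algebraMap_self, RingHom.id_apply]
    exact tendsto_const_nhds
  | add P Q hP hQ =>
    intro α
    simp only [map_add, coeff_add]
    exact (hP α).add (hQ α)
  | mul_X P i hP =>
    intro α
    simp only [map_mul, aeval_X, coeff_mul, MvPowerSeries.coeff_mul]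
    refine tendsto_finsetSum _ fun p _ => (hP p.1).mul ?_
    rw [← coeff_coe, coe_X]
    exact ha i p.2

end EntireSeries

section Extension

variable {σ : Type*} {L : MvPolynomial σ ℝ →ₗ[ℝ] ℝ}

/-- The moments of `L` grow at most like those of a Gaussian measure. -/
def HasGaussianGrowth (L : MvPolynomial σ ℝ →ₗ[ℝ] ℝ) : Prop :=
  ∃ B : ℝ, ∀ α : σ →₀ ℕ, |L (monomial α 1)| ≤ B * √α.degree.factorial

/-- The extension `f ↦ ∑_α f_α L(x^α)` of a functional on polynomials to power series. It is
meaningful only for series for which the sum converges absolutely. -/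
noncomputable def seriesExtension (L : MvPolynomial σ ℝ →ₗ[ℝ] ℝ) (f : MvPowerSeries σ ℝ) : ℝ :=
  ∑' α, f.coeff α * L (monomial α 1)

theorem apply_monomial (L : MvPolynomial σ ℝ →ₗ[ℝ] ℝ) (α : σ →₀ ℕ) (c : ℝ) :
    L (monomial α c) = c * L (monomial α 1) := by
  rw [← smul_eq_mul, ← map_smul, smul_monomial, smul_eq_mul, mul_one]

theorem sum_coeff_mul_apply_monomial (L : MvPolynomial σ ℝ →ₗ[ℝ] ℝ) (P : MvPolynomial σ ℝ) :
    ∑ α ∈ P.support, coeff α P * L (monomial α 1) = L P := by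
  conv_rhs => rw [P.as_sum, map_sum]
  exact Finset.sum_congr rfl fun α _ => (apply_monomial L α _).symm

theorem seriesExtension_coe (L : MvPolynomial σ ℝ →ₗ[ℝ] ℝ) (P : MvPolynomial σ ℝ) :
    seriesExtension L P = L P := by
  rw [← sum_coeff_mul_apply_monomial, seriesExtension]
  simp only [coeff_coe]
  exact tsum_eq_sum fun α hα => by rw [notMem_support_iff.1 hα, zero_mul]

theorem HasGaussianGrowth.summable (hL : HasGaussianGrowth L) {f : MvPowerSeries σ ℝ}
    (hf : f ∈ minimalGaussianType σ) : Summable fun α => f.coeff α * L (monomial α 1) := by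
  obtain ⟨B, hB⟩ := hL
  refine Summable.of_norm_bounded ((hf 1 zero_le_one).mul_left B) fun α => ?_
  rw [Real.norm_eq_abs, abs_mul, gaussianWeight, one_pow, mul_one, mul_left_comm]
  exact mul_le_mul_of_nonneg_left (hB α) (abs_nonneg _)

theorem HasGaussianGrowth.summable_prod (hL : HasGaussianGrowth L) {f g : MvPowerSeries σ ℝ}
    (hf : f ∈ minimalGaussianType σ) (hg : g ∈ minimalGaussianType σ) :
    Summable fun p : (σ →₀ ℕ) × (σ →₀ ℕ) =>
      f.coeff p.1 * g.coeff p.2 * L (monomial (p.1 + p.2) 1) := by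
  obtain ⟨B, hB⟩ := hL
  have hB_nonneg : 0 ≤ B := by simpa using (abs_nonneg _).trans (hB 0)
  let w (h : MvPowerSeries σ ℝ) (α : σ →₀ ℕ) : ℝ := |h.coeff α| * gaussianWeight 2 α.degree
  have hw : ∀ h, 0 ≤ w h :=
    fun h α => mul_nonneg (abs_nonneg _) (gaussianWeight_nonneg zero_le_two _)
  have hfg : Summable fun p : (σ →₀ ℕ) × (σ →₀ ℕ) => w f p.1 * w g p.2 :=
    Summable.mul_of_nonneg (hf 2 zero_le_two) (hg 2 zero_le_two) (hw f) (hw g)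
  refine Summable.of_norm_bounded (hfg.mul_left B) fun p => ?_
  have hweight := gaussianWeight_add_le zero_le_one p.1.degree p.2.degree
  rw [mul_one] at hweight
  calc ‖f.coeff p.1 * g.coeff p.2 * L (monomial (p.1 + p.2) 1)‖
      ≤ |f.coeff p.1 * g.coeff p.2| * (B * gaussianWeight 1 (p.1.degree + p.2.degree)) := by
        rw [Real.norm_eq_abs, abs_mul, gaussianWeight, one_pow, mul_one, ← map_add]
        exact mul_le_mul_of_nonneg_left (hB _) (abs_nonneg _)
    _ ≤ |f.coeff p.1 * g.coeff p.2| *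
          (B * (gaussianWeight 2 p.1.degree * gaussianWeight 2 p.2.degree)) := by
        gcongr
    _ = B * (w f p.1 * w g p.2) := by
        rw [abs_mul]
        ring

theorem HasGaussianGrowth.seriesExtension_mul (hL : HasGaussianGrowth L) {f g : MvPowerSeries σ ℝ}
    (hf : f ∈ minimalGaussianType σ) (hg : g ∈ minimalGaussianType σ) :
    seriesExtension L (f * g) = ∑' p : (σ →₀ ℕ) × (σ →₀ ℕ),
      f.coeff p.1 * g.coeff p.2 * L (monomial (p.1 + p.2) 1) := by
  classical
  have hsum := Finset.HasAntidiagonal.sigmaAntidiagonalEquivProd.summable_iff.2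
    (hL.summable_prod hf hg)
  rw [← Finset.HasAntidiagonal.sigmaAntidiagonalEquivProd.tsum_eq]
  refine Eq.trans (tsum_congr fun γ => ?_)
    (hsum.tsum_sigma' fun γ => (hasSum_fintype _).summable).symm
  rw [MvPowerSeries.coeff_mul, Finset.sum_mul, tsum_fintype, Finset.univ_eq_attach,
    ← Finset.sum_attach]
  refine Finset.sum_congr rfl fun p _ => ?_
  simp only [Function.comp_apply, Finset.HasAntidiagonal.sigmaAntidiagonalEquivProd_apply]
  rw [Finset.HasAntidiagonal.mem_antidiagonal.1 p.2]

theorem seriesExtension_mul_self_nonneg (hL : HasGaussianGrowth L)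
    (hsq : ∀ q, 0 ≤ L (q * q)) {f : MvPowerSeries σ ℝ} (hf : f ∈ minimalGaussianType σ) :
    0 ≤ seriesExtension L (f * f) := by
  rw [hL.seriesExtension_mul hf hf]
  refine ge_of_tendsto' ((hL.summable_prod hf hf).hasSum.comp
    (tendsto_finsetProd_atTop.comp tendsto_atTop_diagonal)) fun s => ?_
  refine (hsq (∑ α ∈ s, monomial α (f.coeff α))).trans_eq (Eq.symm ?_)
  simp only [Function.comp_apply, Finset.sum_product, Finset.sum_mul_sum, map_sum]
  refine Finset.sum_congr rfl fun α _ => Finset.sum_congr rfl fun β _ => ?_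
  rw [monomial_mul, apply_monomial L _ (_ * _)]

theorem seriesExtension_nonneg_of_isSumSq (hL : HasGaussianGrowth L)
    (hsq : ∀ q, 0 ≤ L (q * q)) {f : minimalGaussianType σ} (hf : IsSumSq f) :
    0 ≤ seriesExtension L f := by
  induction hf with
  | zero => simp [seriesExtension]
  | @sq_add f g _ ih =>
    have hadd : seriesExtension L ((f * f + g : minimalGaussianType σ) : MvPowerSeries σ ℝ) =
        seriesExtension L (f * f : MvPowerSeries σ ℝ) + seriesExtension L g := by
      simp only [seriesExtension, Subalgebra.coe_add, Subalgebra.coe_mul, map_add, add_mul]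
      exact (hL.summable (mul_mem f.2 f.2)).tsum_add (hL.summable g.2)
    rw [hadd]
    exact add_nonneg (seriesExtension_mul_self_nonneg hL hsq f.2) ih

end Extension

section Trigonometric

theorem abs_coeff_sin_le (d : ℕ) : |(PowerSeries.sin ℝ).coeff d| ≤ (d.factorial : ℝ)⁻¹ := by
  rw [PowerSeries.sin, PowerSeries.coeff_mk]
  split_ifs <;> simp [abs_div]

theorem abs_coeff_cos_le (d : ℕ) : |(PowerSeries.cos ℝ).coeff d| ≤ (d.factorial : ℝ)⁻¹ := by
  rw [PowerSeries.cos, PowerSeries.coeff_mk]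
  split_ifs <;> simp [abs_div]

theorem derivative_sin :
    PowerSeries.derivative ℝ (PowerSeries.sin ℝ) = PowerSeries.cos ℝ := by
  ext d
  have hd : (d : ℝ) + 1 ≠ 0 := by positivity
  rw [PowerSeries.coeff_derivative, PowerSeries.sin, PowerSeries.cos, PowerSeries.coeff_mk,
    PowerSeries.coeff_mk, Nat.factorial_succ]
  rcases Nat.even_or_odd d with h | h
  · rw [if_neg (by grind), if_pos h, Nat.succ_div_of_not_dvd (by grind)]
    simp only [Nat.cast_mul, Nat.cast_add, Nat.cast_one, map_div₀, eq_ratCast, Rat.cast_pow,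
      Rat.cast_neg, Rat.cast_one, Rat.cast_mul, Rat.cast_add, Rat.cast_natCast, map_natCast]
    field_simp
  · rw [if_pos (by grind), if_neg (by grind), zero_mul]

theorem derivative_cos :
    PowerSeries.derivative ℝ (PowerSeries.cos ℝ) = -PowerSeries.sin ℝ := by
  ext d
  have hd : (d : ℝ) + 1 ≠ 0 := by positivity
  rw [PowerSeries.coeff_derivative, map_neg, PowerSeries.sin, PowerSeries.cos,
    PowerSeries.coeff_mk, PowerSeries.coeff_mk, Nat.factorial_succ]
  rcases Nat.even_or_odd d with h | h
  · rw [if_neg (by grind), if_pos h, zero_mul, neg_zero]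
  · rw [if_pos (by grind), if_neg (by grind), Nat.succ_div_of_dvd (by grind), pow_succ]
    simp only [mul_neg, mul_one, Nat.cast_mul, Nat.cast_add, Nat.cast_one, map_div₀, eq_ratCast,
      Rat.cast_neg, Rat.cast_pow, Rat.cast_one, Rat.cast_mul, Rat.cast_add, Rat.cast_natCast,
      map_natCast]
    field_simp

theorem sin_sq_add_cos_sq_powerSeries :
    PowerSeries.sin ℝ ^ 2 + PowerSeries.cos ℝ ^ 2 = 1 := by
  refine PowerSeries.derivative.ext ?_ ?_
  · rw [map_add, Derivation.leibniz_pow, Derivation.leibniz_pow, derivative_sin, derivative_cos,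
      PowerSeries.derivative_one]
    simp only [smul_eq_mul, nsmul_eq_mul]
    ring
  · rw [map_add, map_pow, map_pow, ← PowerSeries.coeff_zero_eq_constantCoeff_apply,
      ← PowerSeries.coeff_zero_eq_constantCoeff_apply]
    simp [PowerSeries.sin, PowerSeries.cos]

/-- The power series of `R sin(X / R)`, a bounded approximation of `X`. -/
noncomputable def scaledSin (R : ℝ) : PowerSeries ℝ :=
  R • PowerSeries.rescale R⁻¹ (PowerSeries.sin ℝ)

theorem abs_coeff_rescale_le {f : PowerSeries ℝ} {d : ℕ}
    (hf : |f.coeff d| ≤ (d.factorial : ℝ)⁻¹) {c : ℝ} (hc : |c| ≤ 1) :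
    |(PowerSeries.rescale c f).coeff d| ≤ (d.factorial : ℝ)⁻¹ := by
  rw [PowerSeries.coeff_rescale, abs_mul, abs_pow]
  exact (mul_le_of_le_one_left (abs_nonneg _) (pow_le_one₀ (abs_nonneg _) hc)).trans hf

theorem coeff_scaledSin_zero (R : ℝ) : (scaledSin R).coeff 0 = 0 := by
  simp [scaledSin, PowerSeries.sin]

theorem coeff_scaledSin_succ {R : ℝ} (hR : R ≠ 0) (d : ℕ) :
    (scaledSin R).coeff (d + 1) = R⁻¹ ^ d * (PowerSeries.sin ℝ).coeff (d + 1) := by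
  rw [scaledSin, map_smul, PowerSeries.coeff_rescale, smul_eq_mul, pow_succ']
  field_simp

theorem abs_coeff_scaledSin_le {R : ℝ} (hR : 1 ≤ R) :
    ∀ d, |(scaledSin R).coeff d| ≤ (d.factorial : ℝ)⁻¹
  | 0 => by simp [coeff_scaledSin_zero]
  | d + 1 => by
    have hR_inv : |R⁻¹| ≤ 1 := by
      rw [abs_of_nonneg (by positivity)]
      exact inv_le_one_of_one_le₀ hR
    rw [coeff_scaledSin_succ (by positivity), abs_mul, abs_pow]
    exact (mul_le_of_le_one_left (abs_nonneg _) (pow_le_one₀ (abs_nonneg _) hR_inv)).trans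
      (abs_coeff_sin_le _)

theorem tendsto_coeff_scaledSin :
    ∀ d, Tendsto (fun R => (scaledSin R).coeff d) atTop
      (𝓝 ((PowerSeries.X : PowerSeries ℝ).coeff d))
  | 0 => by simp [coeff_scaledSin_zero]
  | d + 1 => by
    have hlim : Tendsto (fun R : ℝ => R⁻¹ ^ d * (PowerSeries.sin ℝ).coeff (d + 1)) atTop
        (𝓝 (0 ^ d * (PowerSeries.sin ℝ).coeff (d + 1))) :=
      (tendsto_inv_atTop_zero.pow d).mul_const _
    have hcoeff : 0 ^ d * (PowerSeries.sin ℝ).coeff (d + 1) =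
        (PowerSeries.X : PowerSeries ℝ).coeff (d + 1) := by
      cases d <;> simp [PowerSeries.sin, PowerSeries.coeff_X]
    rw [← hcoeff]
    refine hlim.congr' ?_
    filter_upwards [eventually_ne_atTop 0] with R hR using (coeff_scaledSin_succ hR d).symm

theorem isSumSq_algebraMap {A : Type*} [CommRing A] [Algebra ℝ A] {r : ℝ} (hr : 0 ≤ r) :
    IsSumSq (algebraMap ℝ A r) := by
  rw [← Real.mul_self_sqrt hr, map_mul]
  exact IsSumSq.mul_self _

theorem isSumSq_algebraMap_add {A : Type*} [CommRing A] [Algebra ℝ A] {r : ℝ} (hr : 0 < r)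
    {s c : A} (h : s ^ 2 + c ^ 2 = algebraMap ℝ A (r ^ 2)) : IsSumSq (algebraMap ℝ A r + s) := by
  have hinv : algebraMap ℝ A (2 * r)⁻¹ * algebraMap ℝ A r = algebraMap ℝ A (1 / 2) := by
    rw [← map_mul]
    congr 1
    field_simp
  have hhalf : algebraMap ℝ A (1 / 2) * 2 = 1 := by
    rw [← map_ofNat (algebraMap ℝ A) 2, ← map_mul]
    norm_num
  have hsq : algebraMap ℝ A r + s =
      algebraMap ℝ A (2 * r)⁻¹ * ((algebraMap ℝ A r + s) * (algebraMap ℝ A r + s) + c * c) := by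
    rw [map_pow] at h
    linear_combination (-(2 : A) * (algebraMap ℝ A r + s)) * hinv
      - algebraMap ℝ A (2 * r)⁻¹ * h - (algebraMap ℝ A r + s) * hhalf
  rw [hsq]
  exact (isSumSq_algebraMap (by positivity)).mul ((IsSumSq.mul_self _).add (IsSumSq.mul_self _))

variable {σ : Type*} {R : ℝ}

/-- The function `R sin(x_i / R)`, as an element of the algebra of entire series. -/
noncomputable def scaledSinX (hR : 1 ≤ R) (i : σ) : minimalGaussianType σ :=
  ⟨(scaledSin R).subst (MvPowerSeries.X i),
    subst_X_mem_minimalGaussianType i (abs_coeff_scaledSin_le hR)⟩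

theorem exists_scaledSinX_sq_add_sq_eq (hR : 1 ≤ R) (i : σ) :
    ∃ c, scaledSinX hR i ^ 2 + c ^ 2 = algebraMap ℝ (minimalGaussianType σ) (R ^ 2) := by
  have hR_inv : |R⁻¹| ≤ 1 := by
    rw [abs_of_nonneg (by positivity)]
    exact inv_le_one_of_one_le₀ hR
  let φ : PowerSeries ℝ →ₐ[ℝ] MvPowerSeries σ ℝ :=
    PowerSeries.substAlgHom (PowerSeries.HasSubst.X i)
  have hφ : ∀ f, f.subst (MvPowerSeries.X i) = φ f := fun f =>
    (congr_fun (PowerSeries.coe_substAlgHom _) f).symm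
  refine ⟨R • ⟨(PowerSeries.rescale R⁻¹ (PowerSeries.cos ℝ)).subst (MvPowerSeries.X i),
    subst_X_mem_minimalGaussianType i fun d => abs_coeff_rescale_le (abs_coeff_cos_le d) hR_inv⟩,
    Subtype.ext ?_⟩
  have hone : φ (PowerSeries.rescale R⁻¹ (PowerSeries.sin ℝ ^ 2 + PowerSeries.cos ℝ ^ 2)) = 1 := by
    rw [sin_sq_add_cos_sq_powerSeries, map_one, map_one]
  change (scaledSin R).subst (MvPowerSeries.X i) ^ 2 +
    (R • (PowerSeries.rescale R⁻¹ (PowerSeries.cos ℝ)).subst (MvPowerSeries.X i)) ^ 2 =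
      algebraMap ℝ (MvPowerSeries σ ℝ) (R ^ 2)
  rw [hφ, hφ, scaledSin, map_smul, smul_pow, smul_pow, ← smul_add, ← map_pow, ← map_pow, ← map_pow,
    ← map_pow, ← map_add, ← map_add, hone, Algebra.algebraMap_eq_smul_one]

theorem isSumSq_algebraMap_add_scaledSinX (hR : 1 ≤ R) (i : σ) :
    IsSumSq (algebraMap ℝ (minimalGaussianType σ) R + scaledSinX hR i) := by
  obtain ⟨c, hc⟩ := exists_scaledSinX_sq_add_sq_eq hR i
  exact isSumSq_algebraMap_add (by linarith) hc

theorem isSumSq_algebraMap_sub_scaledSinX (hR : 1 ≤ R) (i : σ) :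
    IsSumSq (algebraMap ℝ (minimalGaussianType σ) R - scaledSinX hR i) := by
  obtain ⟨c, hc⟩ := exists_scaledSinX_sq_add_sq_eq hR i
  rw [sub_eq_add_neg]
  exact isSumSq_algebraMap_add (by linarith) ((congrArg (· + c ^ 2) (neg_sq _)).trans hc)

theorem isSumSq_aeval_scaledSinX [Finite σ] (hR : 1 ≤ R) {P : MvPolynomial σ ℝ} {δ : ℝ}
    (hδ : 0 < δ) (hP : ∀ x, δ ≤ eval x P) : IsSumSq (aeval (scaledSinX hR) P) := by
  refine Subsemiring.mem_sumSq.1 (aeval_mem_of_pos_on_cube _ (fun c hc => ?_)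
    (zero_lt_one.trans_le hR) (fun i => ?_) (fun i => ?_) hδ fun x _ => hP x)
  · exact Subsemiring.mem_sumSq.2 (isSumSq_algebraMap hc)
  · exact Subsemiring.mem_sumSq.2 (isSumSq_algebraMap_add_scaledSinX hR i)
  · exact Subsemiring.mem_sumSq.2 (isSumSq_algebraMap_sub_scaledSinX hR i)

end Trigonometric

section Haviland

variable {σ : Type*} {L : MvPolynomial σ ℝ →ₗ[ℝ] ℝ}

theorem tendsto_coeff_subst_scaledSin (i : σ) (α : σ →₀ ℕ) :
    Tendsto (fun R => ((scaledSin R).subst (MvPowerSeries.X i : MvPowerSeries σ ℝ)).coeff α) atTop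
      (𝓝 ((MvPowerSeries.X i : MvPowerSeries σ ℝ).coeff α)) := by
  classical
  have hX : (MvPowerSeries.X i : MvPowerSeries σ ℝ).coeff α =
      ((PowerSeries.X : PowerSeries ℝ).subst (MvPowerSeries.X i : MvPowerSeries σ ℝ)).coeff α := by
    rw [PowerSeries.subst_X (PowerSeries.HasSubst.X i)]
  rw [hX]
  simp only [PowerSeries.coeff_subst_single]
  split_ifs
  · exact tendsto_coeff_scaledSin _
  · exact tendsto_const_nhds

theorem abs_coeff_subst_X_le {f F : PowerSeries ℝ} (hf : ∀ d, |f.coeff d| ≤ F.coeff d) (i : σ)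
    (α : σ →₀ ℕ) :
    |(f.subst (MvPowerSeries.X i : MvPowerSeries σ ℝ)).coeff α| ≤
      (F.subst (MvPowerSeries.X i : MvPowerSeries σ ℝ)).coeff α := by
  classical
  rw [PowerSeries.coeff_subst_single, PowerSeries.coeff_subst_single]
  split_ifs
  · exact hf _
  · rw [abs_zero]

theorem tendsto_seriesExtension_aeval_scaledSin (hL : HasGaussianGrowth L)
    (P : MvPolynomial σ ℝ) :
    Tendsto (fun R => seriesExtension L
      (aeval (fun i => (scaledSin R).subst (MvPowerSeries.X i : MvPowerSeries σ ℝ)) P)) atTop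
      (𝓝 (L P)) := by
  let E : PowerSeries ℝ := PowerSeries.mk fun d => (d.factorial : ℝ)⁻¹
  have hE : ∀ d, |E.coeff d| ≤ (d.factorial : ℝ)⁻¹ := fun d => by
    rw [PowerSeries.coeff_mk, abs_of_nonneg (by positivity)]
  obtain ⟨F, hF, hbound⟩ := exists_abs_coeff_aeval_le P
    (G := fun i => E.subst (MvPowerSeries.X i)) fun i => subst_X_mem_minimalGaussianType i hE
  rw [← seriesExtension_coe]
  refine tendsto_tsum_of_dominated_convergence (hL.summable hF).abs (fun α => ?_) ?_
  · rw [coeff_coe]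
    exact (tendsto_coeff_aeval tendsto_coeff_subst_scaledSin P α).mul_const _
  · filter_upwards [eventually_ge_atTop 1] with R hR α
    have hsin : ∀ d, |(scaledSin R).coeff d| ≤ E.coeff d := fun d => by
      rw [PowerSeries.coeff_mk]
      exact abs_coeff_scaledSin_le hR d
    rw [Real.norm_eq_abs, abs_mul, abs_mul]
    exact mul_le_mul_of_nonneg_right
      ((hbound _ (fun i => abs_coeff_subst_X_le hsin i) α).trans (le_abs_self _)) (abs_nonneg _)

theorem nonneg_of_forall_pos_nonneg_add_mul {a b : ℝ} (h : ∀ δ > 0, 0 ≤ a + δ * b) : 0 ≤ a := by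
  have hlim : Tendsto (fun δ : ℝ => a + δ * b) (𝓝[>] 0) (𝓝 (a + 0 * b)) :=
    (tendsto_const_nhds.add (tendsto_id.mul_const b)).mono_left nhdsWithin_le_nhds
  rw [zero_mul, add_zero] at hlim
  exact ge_of_tendsto hlim (eventually_nhdsWithin_of_forall h)

theorem nonneg_of_eval_nonneg [Finite σ] (hL : HasGaussianGrowth L) (hsq : ∀ q, 0 ≤ L (q * q))
    {P : MvPolynomial σ ℝ} (hP : ∀ x, 0 ≤ eval x P) : 0 ≤ L P := by
  refine nonneg_of_forall_pos_nonneg_add_mul (b := L 1) fun δ hδ => ?_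
  have hPδ : ∀ x, δ ≤ eval x (P + C δ) := fun x => by simpa using hP x
  have hL_add : L (P + C δ) = L P + δ * L 1 := by
    rw [map_add, C_apply, apply_monomial, ← C_apply, C_1]
  rw [← hL_add]
  refine ge_of_tendsto (tendsto_seriesExtension_aeval_scaledSin hL _) ?_
  filter_upwards [eventually_ge_atTop 1] with R hR
  have hcoe : aeval (fun i => (scaledSin R).subst (MvPowerSeries.X i : MvPowerSeries σ ℝ))
      (P + C δ) = (aeval (scaledSinX hR) (P + C δ) : minimalGaussianType σ) :=
    (aeval_algebraMap_apply (MvPowerSeries σ ℝ) (scaledSinX hR) (P + C δ))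
  rw [hcoe]
  exact seriesExtension_nonneg_of_isSumSq hL hsq (isSumSq_aeval_scaledSinX hR hδ hPδ)

end Haviland

section Penalty

theorem exists_nat_forall_pos_add_mul {X : Type*} [TopologicalSpace X] {K : Set X}
    (hK : IsCompact K) {w G : X → ℝ} (hw : Continuous w) (hG : Continuous G)
    (hG_nonneg : ∀ x, 0 ≤ G x) (hpos : ∀ x ∈ K, G x = 0 → 0 < w x) :
    ∃ N : ℕ, ∀ x ∈ K, 0 < w x + N * G x := by
  refine hK.elim_directed_cover (fun N : ℕ => {x | 0 < w x + N * G x})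
    (fun N => isOpen_lt continuous_const (hw.add (continuous_const.mul hG)))
    (fun x hx => Set.mem_iUnion.2 ?_) (Monotone.directed_le fun M N hMN x hx => ?_)
  · rcases (hG_nonneg x).eq_or_lt with h | h
    · exact ⟨0, by simpa using hpos x hx h.symm⟩
    · obtain ⟨N, hN⟩ := exists_nat_gt (-w x / G x)
      rw [div_lt_iff₀ h] at hN
      exact ⟨N, show 0 < w x + N * G x by linarith⟩
  · have hMN' : (M : ℝ) * G x ≤ N * G x := by
      gcongr
      exact hG_nonneg x
    exact lt_of_lt_of_le hx (add_le_add_right hMN' _)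

variable {σ : Type*}

/-- Adding any positive multiple of this polynomial to `F` makes it positive near infinity and
wherever `F` is nonnegative. -/
noncomputable def growthPolynomial [Fintype σ] (F : MvPolynomial σ ℝ) : MvPolynomial σ ℝ :=
  1 + F ^ 2 + ∑ i, X i ^ 2

theorem eval_growthPolynomial [Fintype σ] (F : MvPolynomial σ ℝ) (x : σ → ℝ) :
    eval x (growthPolynomial F) = 1 + eval x F ^ 2 + ∑ i, x i ^ 2 := by
  simp [growthPolynomial]

theorem eval_add_mul_growthPolynomial_nonneg [Fintype σ] {F : MvPolynomial σ ℝ} {δ : ℝ}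
    (hδ : 0 < δ) {x : σ → ℝ} (hx : 1 / (2 * δ) < ‖x‖) :
    0 ≤ eval x F + δ * eval x (growthPolynomial F) := by
  obtain ⟨i, hi⟩ : ∃ i, 1 / (2 * δ) < |x i| := by
    contrapose! hx
    exact (pi_norm_le_iff_of_nonneg (by positivity)).2 hx
  have hsum : (1 / (2 * δ)) ^ 2 ≤ ∑ i, x i ^ 2 :=
    calc (1 / (2 * δ)) ^ 2 ≤ |x i| ^ 2 := by gcongr
      _ = x i ^ 2 := sq_abs _
      _ ≤ ∑ i, x i ^ 2 :=
        Finset.single_le_sum (fun j _ => sq_nonneg (x j)) (Finset.mem_univ i)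
  calc 0 ≤ δ * (eval x F + 1 / (2 * δ)) ^ 2 + δ := by positivity
    _ = eval x F + δ * (1 + eval x F ^ 2 + (1 / (2 * δ)) ^ 2) := by
        field_simp
        ring
    _ ≤ eval x F + δ * eval x (growthPolynomial F) := by
        rw [eval_growthPolynomial]
        gcongr

theorem exists_nat_eval_penalized_nonneg [Fintype σ] {F G : MvPolynomial σ ℝ}
    (hG : ∀ x, 0 ≤ eval x G) (hF : ∀ x, eval x G = 0 → 0 ≤ eval x F) {δ : ℝ} (hδ : 0 < δ) :
    ∃ N : ℕ, ∀ x, 0 ≤ eval x (F + δ • growthPolynomial F + (N : ℝ) • G) := by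
  obtain ⟨N, hN⟩ := exists_nat_forall_pos_add_mul
    (isCompact_closedBall (0 : σ → ℝ) (1 / (2 * δ)))
    (w := fun x => eval x F + δ * eval x (growthPolynomial F))
    ((continuous_eval F).add (continuous_const.mul (continuous_eval _))) (continuous_eval G) hG
    fun x _ hx => by
      have hFx := hF x hx
      rw [eval_growthPolynomial]
      positivity
  refine ⟨N, fun x => ?_⟩
  simp only [map_add, smul_eval]
  by_cases hx : x ∈ Metric.closedBall 0 (1 / (2 * δ))
  · exact (hN x hx).le
  · rw [mem_closedBall_zero_iff, not_le] at hx
    exact add_nonneg (eval_add_mul_growthPolynomial_nonneg hδ hx)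
      (mul_nonneg N.cast_nonneg (hG x))

theorem le_apply_of_forall_le_eval [Finite σ] {L : MvPolynomial σ ℝ →ₗ[ℝ] ℝ}
    (hL : HasGaussianGrowth L) (hsq : ∀ q, 0 ≤ L (q * q)) (hone : L 1 = 1) {f G : MvPolynomial σ ℝ}
    (hG : ∀ x, 0 ≤ eval x G) (hLG : L G ≤ 0) {c : ℝ} (hc : ∀ x, eval x G = 0 → c ≤ eval x f) :
    c ≤ L f := by
  have := Fintype.ofFinite σ
  have hLF : L (f - C c) = L f - c := by
    rw [map_sub, C_apply, apply_monomial, ← C_apply, C_1, hone, mul_one]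
  rw [← sub_nonneg, ← hLF]
  refine nonneg_of_forall_pos_nonneg_add_mul (b := L (growthPolynomial (f - C c))) fun δ hδ => ?_
  obtain ⟨N, hN⟩ := exists_nat_eval_penalized_nonneg (F := f - C c) hG
    (fun x hx => by simpa using hc x hx) hδ
  have hnonneg := nonneg_of_eval_nonneg hL hsq hN
  simp only [map_add, map_smul, smul_eq_mul] at hnonneg
  exact hnonneg.trans (add_le_of_nonpos_right
    (mul_nonpos_of_nonneg_of_nonpos N.cast_nonneg hLG))

end Penalty

section PseudoExpectation

variable {σ : Type*} {L : MvPolynomial σ ℝ →ₗ[ℝ] ℝ} {r : ℕ}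

/-- `L` behaves like the expectation under a probability measure on squares of polynomials of
degree at most `r`. -/
structure IsPseudoExpectation (L : MvPolynomial σ ℝ →ₗ[ℝ] ℝ) (r : ℕ) : Prop where
  map_one : L 1 = 1
  mul_self_nonneg : ∀ q : MvPolynomial σ ℝ, q.totalDegree ≤ r → 0 ≤ L (q * q)

theorem totalDegree_monomial_one (α : σ →₀ ℕ) :
    (monomial α (1 : ℝ)).totalDegree = α.degree :=
  totalDegree_monomial α one_ne_zero

theorem IsPseudoExpectation.sq_apply_monomial_le (hL : IsPseudoExpectation L r) {α : σ →₀ ℕ}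
    (hα : α.degree ≤ r) : L (monomial α 1) ^ 2 ≤ L (monomial (α + α) 1) := by
  have hdeg : (monomial α 1 - C (L (monomial α 1))).totalDegree ≤ r :=
    (totalDegree_sub_C_le _ _).trans ((totalDegree_monomial_one α).trans_le hα)
  have hsq : (monomial α 1 - C (L (monomial α 1))) * (monomial α 1 - C (L (monomial α 1))) =
      monomial (α + α) 1 - (2 * L (monomial α 1)) • monomial α 1 +
        (L (monomial α 1) ^ 2) • (1 : MvPolynomial σ ℝ) := by
    rw [← mul_one (1 : ℝ), ← monomial_mul, mul_one, smul_eq_C_mul, smul_eq_C_mul, map_mul,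
      map_pow, map_ofNat]
    ring
  have hnonneg := hL.mul_self_nonneg _ hdeg
  rw [hsq, map_add, map_sub, map_smul, map_smul, hL.map_one, smul_eq_mul, smul_eq_mul] at hnonneg
  linarith

theorem IsPseudoExpectation.apply_monomial_add_self_nonneg (hL : IsPseudoExpectation L r)
    {α : σ →₀ ℕ} (hα : α.degree ≤ r) : 0 ≤ L (monomial (α + α) 1) :=
  (sq_nonneg _).trans (hL.sq_apply_monomial_le hα)

theorem IsPseudoExpectation.two_mul_apply_monomial_add_le (hL : IsPseudoExpectation L r)
    {α β : σ →₀ ℕ} (hα : α.degree ≤ r) (hβ : β.degree ≤ r) :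
    2 * L (monomial (α + β) 1) ≤ L (monomial (α + α) 1) + L (monomial (β + β) 1) := by
  have hdeg : (monomial α (1 : ℝ) - monomial β 1).totalDegree ≤ r :=
    (totalDegree_sub _ _).trans (max_le ((totalDegree_monomial_one α).trans_le hα)
      ((totalDegree_monomial_one β).trans_le hβ))
  have hnonneg := hL.mul_self_nonneg _ hdeg
  simp only [sub_mul, mul_sub, monomial_mul, one_mul, map_sub, add_comm β α] at hnonneg
  linarith

theorem exists_ne_apply_ne_zero {β : σ →₀ ℕ} {i : σ} (h : β ≠ Finsupp.single i β.degree) :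
    ∃ j ≠ i, β j ≠ 0 := by
  contrapose! h
  obtain ⟨k, rfl⟩ : ∃ k, β = Finsupp.single i k := ⟨β i, Finsupp.ext fun j => by
    by_cases hji : j = i
    · rw [hji, Finsupp.single_eq_same]
    · rw [h j hji, Finsupp.single_eq_of_ne hji]⟩
  rw [Finsupp.degree_single]

theorem single_add_single_le {β : σ →₀ ℕ} {i j : σ} (hji : j ≠ i) (hi : β i ≠ 0) (hj : β j ≠ 0) :
    Finsupp.single j 1 + Finsupp.single i 1 ≤ β := by
  classical
  intro k
  rw [Finsupp.add_apply, Finsupp.single_apply, Finsupp.single_apply]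
  split_ifs <;> grind

theorem exists_le_apply_single_of_midpoint_convex [Finite σ] [Nonempty σ]
    {m : (σ →₀ ℕ) → ℝ} {d : ℕ}
    (hm : ∀ α β γ, α.degree = d → β.degree = d → α + β = γ + γ → 2 * m γ ≤ m α + m β)
    {γ : σ →₀ ℕ} (hγ : γ.degree = d) : ∃ i, m γ ≤ m (Finsupp.single i d) := by
  classical
  have hfin : {p : (σ →₀ ℕ) × σ | p.1.degree = d}.Finite :=
    (((Finsupp.finite_of_degree_le d).subset fun α hα => le_of_eq hα).prod Set.finite_univ).subset
      fun p hp => ⟨hp, trivial⟩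
  -- Among the maximizers of `m`, take one with the largest possible single coordinate.
  obtain ⟨⟨β, i⟩, hβ, hmax⟩ := hfin.exists_maximalFor (fun p => toLex (m p.1, p.1 p.2)) _
    ⟨(γ, Classical.arbitrary σ), hγ⟩
  have hlex : ∀ α j, α.degree = d → m α < m β ∨ m α = m β ∧ α j ≤ β i := fun α j hα =>
    Prod.Lex.toLex_le_toLex.1 ((le_total _ _).elim id fun h => hmax (j := (α, j)) hα h)
  have hmβ : ∀ α, α.degree = d → m α ≤ m β := fun α hα =>
    (hlex α i hα).elim le_of_lt fun h => h.1.le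
  suffices β = Finsupp.single i d from ⟨i, this ▸ hmβ γ hγ⟩
  by_contra hne
  obtain ⟨j, hji, hj⟩ : ∃ j ≠ i, β j ≠ 0 := exists_ne_apply_ne_zero (hβ.symm ▸ hne)
  have hi : β i ≠ 0 := by
    have := (hlex β j hβ).resolve_left (lt_irrefl _)
    omega
  obtain ⟨δ, rfl⟩ := exists_add_of_le (single_add_single_le hji hi hj)
  have hdeg : ∀ k, (Finsupp.single k 2 + δ).degree = d := fun k => by
    rw [← hβ]
    simp only [map_add, Finsupp.degree_single]
  have hlt : m (Finsupp.single i 2 + δ) < m (Finsupp.single j 1 + Finsupp.single i 1 + δ) :=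
    (hlex _ i (hdeg i)).resolve_right fun h => by
      have hle := h.2
      simp [Finsupp.single_eq_of_ne hji.symm] at hle
  have hmid := hm _ _ (Finsupp.single j 1 + Finsupp.single i 1 + δ) (hdeg i) (hdeg j) (by
    rw [show (2 : ℕ) = 1 + 1 from rfl, Finsupp.single_add, Finsupp.single_add]
    abel)
  linarith [hmβ _ (hdeg j)]

/-- The linear functional with prescribed moments `y`. -/
noncomputable def momentFunctional (y : (σ →₀ ℕ) → ℝ) : MvPolynomial σ ℝ →ₗ[ℝ] ℝ :=
  (basisMonomials σ ℝ).constr ℝ y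

theorem momentFunctional_monomial (y : (σ →₀ ℕ) → ℝ) (α : σ →₀ ℕ) :
    momentFunctional y (monomial α 1) = y α :=
  (basisMonomials σ ℝ).constr_basis ℝ y α

theorem exists_tendsto_of_eventually_abs_le {ι : Type*} {U : Ultrafilter ι}
    {L : ι → MvPolynomial σ ℝ →ₗ[ℝ] ℝ}
    (h : ∀ α, ∃ b, ∀ᶠ k in (U : Filter ι), |L k (monomial α 1)| ≤ b) :
    ∃ L' : MvPolynomial σ ℝ →ₗ[ℝ] ℝ, ∀ p, Tendsto (fun k => L k p) U (𝓝 (L' p)) := by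
  have hmonomial : ∀ α, ∃ l, Tendsto (fun k => L k (monomial α 1)) U (𝓝 l) := fun α => by
    obtain ⟨b, hb⟩ := h α
    obtain ⟨l, -, hl⟩ := isCompact_Icc.ultrafilter_le_nhds (U.map fun k => L k (monomial α 1))
      (le_principal_iff.2 (hb.mono fun k hk => abs_le.1 hk))
    exact ⟨l, hl⟩
  choose y hy using hmonomial
  refine ⟨momentFunctional y, fun p => ?_⟩
  simp only [← sum_coeff_mul_apply_monomial _ p, momentFunctional_monomial]
  exact tendsto_finsetSum _ fun α _ => (hy α).const_mul _

end PseudoExpectation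

section Theta

variable {n r : ℕ} {L : MvPolynomial (Fin n) ℝ →ₗ[ℝ] ℝ}

theorem apply_theta (L : MvPolynomial (Fin n) ℝ →ₗ[ℝ] ℝ) (r : ℕ) :
    L (theta n r) = ∑ k ∈ Finset.range (r + 1), ∑ i,
      (k.factorial : ℝ)⁻¹ * L (monomial (Finsupp.single i k + Finsupp.single i k) 1) := by
  simp only [theta, map_sum, one_div, C_mul_X_pow_eq_monomial, apply_monomial L _ _⁻¹,
    ← Finsupp.single_add, two_mul]

theorem IsPseudoExpectation.theta_term_nonneg (hL : IsPseudoExpectation L r) {k : ℕ}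
    (hk : k ∈ Finset.range (r + 1)) (i : Fin n) :
    0 ≤ (k.factorial : ℝ)⁻¹ * L (monomial (Finsupp.single i k + Finsupp.single i k) 1) :=
  mul_nonneg (by positivity) (hL.apply_monomial_add_self_nonneg
    ((Finsupp.degree_single i k).trans_le (Finset.mem_range_succ_iff.1 hk)))

theorem IsPseudoExpectation.sum_theta_terms_le (hL : IsPseudoExpectation L r) {k : ℕ}
    (hk : k ≤ r) :
    ∑ i, (k.factorial : ℝ)⁻¹ * L (monomial (Finsupp.single i k + Finsupp.single i k) 1) ≤
      L (theta n r) := by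
  rw [apply_theta]
  exact Finset.single_le_sum (f := fun k => ∑ i, (k.factorial : ℝ)⁻¹ *
      L (monomial (Finsupp.single i k + Finsupp.single i k) 1))
    (fun k hk => Finset.sum_nonneg fun i _ => hL.theta_term_nonneg hk i)
    (Finset.mem_range_succ_iff.2 hk)

theorem IsPseudoExpectation.natCast_le_apply_theta (hL : IsPseudoExpectation L r) :
    (n : ℝ) ≤ L (theta n r) := by
  have h := hL.sum_theta_terms_le r.zero_le
  simpa [hL.map_one] using h

theorem IsPseudoExpectation.apply_monomial_single_le (hL : IsPseudoExpectation L r) {k : ℕ}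
    (hk : k ≤ r) (i : Fin n) :
    L (monomial (Finsupp.single i k + Finsupp.single i k) 1) ≤
      k.factorial * L (theta n r) := by
  rw [← inv_mul_le_iff₀ (by positivity)]
  exact (Finset.single_le_sum (f := fun i => (k.factorial : ℝ)⁻¹ *
      L (monomial (Finsupp.single i k + Finsupp.single i k) 1))
    (fun i _ => hL.theta_term_nonneg (Finset.mem_range_succ_iff.2 hk) i)
    (Finset.mem_univ i)).trans (hL.sum_theta_terms_le hk)

theorem IsPseudoExpectation.abs_apply_monomial_le [NeZero n] (hL : IsPseudoExpectation L r)
    {α : Fin n →₀ ℕ} (hα : α.degree ≤ r) :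
    |L (monomial α 1)| ≤ √(L (theta n r)) * √α.degree.factorial := by
  obtain ⟨i, hi⟩ := exists_le_apply_single_of_midpoint_convex
    (m := fun γ => L (monomial (γ + γ) 1)) (fun β γ δ hβ hγ hδ => by
      rw [← hδ]
      exact hL.two_mul_apply_monomial_add_le (hβ.trans_le hα) (hγ.trans_le hα)) (rfl : α.degree = _)
  rw [mul_comm, ← Real.sqrt_mul (by positivity)]
  refine Real.abs_le_sqrt ?_
  calc L (monomial α 1) ^ 2 ≤ L (monomial (α + α) 1) := hL.sq_apply_monomial_le hα
    _ ≤ L (monomial (Finsupp.single i α.degree + Finsupp.single i α.degree) 1) := hi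
    _ ≤ α.degree.factorial * L (theta n r) := hL.apply_monomial_single_le hα i

theorem IsPseudoExpectation.abs_apply_le [NeZero n] (hL : IsPseudoExpectation L r)
    {f : MvPolynomial (Fin n) ℝ} (hf : f.totalDegree ≤ r) :
    |L f| ≤ (∑ α ∈ f.support, |coeff α f| * √α.degree.factorial) * √(L (theta n r)) := by
  rw [← sum_coeff_mul_apply_monomial L f, Finset.sum_mul]
  refine (Finset.abs_sum_le_sum_abs _ _).trans (Finset.sum_le_sum fun α hα => ?_)
  rw [abs_mul, mul_assoc, mul_comm (√_)]
  gcongr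
  exact hL.abs_apply_monomial_le ((le_totalDegree hα).trans hf)

/-- Coercivity of the perturbed objective: `|L f|` is only of order `√(L (theta n r))`, so that
`ε L (theta n r)` absorbs it. -/
theorem exists_apply_theta_le [NeZero n] (f : MvPolynomial (Fin n) ℝ) {ε : ℝ} (hε : 0 < ε)
    (c : ℝ) :
    ∃ B, ∀ r ≥ f.totalDegree, ∀ L, IsPseudoExpectation L r →
      L (f + C ε * theta n r) < c → L (theta n r) ≤ B := by
  let A := ∑ α ∈ f.support, |coeff α f| * √α.degree.factorial
  refine ⟨2 / ε * (c + A ^ 2 / (2 * ε)), fun r hr L hL hlt => ?_⟩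
  have hθ : 0 ≤ L (theta n r) := n.cast_nonneg.trans hL.natCast_le_apply_theta
  rw [map_add, ← smul_eq_C_mul, map_smul, smul_eq_mul] at hlt
  have hf : -(A * √(L (theta n r))) ≤ L f := neg_le_of_abs_le (hL.abs_apply_le hr)
  have hamgm : A * √(L (theta n r)) ≤ ε / 2 * L (theta n r) + A ^ 2 / (2 * ε) := by
    have hsq := mul_nonneg (inv_nonneg.2 hε.le) (sq_nonneg (ε * √(L (theta n r)) - A))
    rw [sub_sq, mul_pow, Real.sq_sqrt hθ] at hsq
    field_simp at hsq ⊢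
    linarith
  calc L (theta n r) = 2 / ε * (ε / 2 * L (theta n r)) := by field_simp
    _ ≤ 2 / ε * (c + A ^ 2 / (2 * ε)) := by
        gcongr
        linarith

theorem exists_tendsto_isPseudoExpectation [NeZero n] {ι : Type*} {U : Ultrafilter ι} {r : ι → ℕ}
    (hr : Tendsto r U atTop) {L : ι → MvPolynomial (Fin n) ℝ →ₗ[ℝ] ℝ}
    (hL : ∀ k, IsPseudoExpectation (L k) (r k)) {B : ℝ}
    (hB : ∀ᶠ k in (U : Filter ι), L k (theta n (r k)) ≤ B) :
    ∃ L' : MvPolynomial (Fin n) ℝ →ₗ[ℝ] ℝ, (∀ p, Tendsto (fun k => L k p) U (𝓝 (L' p))) ∧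
      HasGaussianGrowth L' ∧ ∀ d, IsPseudoExpectation L' d := by
  have hmoment : ∀ α, ∀ᶠ k in (U : Filter ι),
      |L k (monomial α 1)| ≤ √B * √α.degree.factorial := fun α => by
    filter_upwards [hr.eventually_ge_atTop α.degree, hB] with k hk hBk
    exact ((hL k).abs_apply_monomial_le hk).trans (by gcongr)
  obtain ⟨L', hL'⟩ := exists_tendsto_of_eventually_abs_le fun α => ⟨_, hmoment α⟩
  refine ⟨L', hL', ⟨√B, fun α => le_of_tendsto (hL' _).abs (hmoment α)⟩, fun d => ⟨?_, ?_⟩⟩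
  · exact tendsto_nhds_unique (hL' 1) (by simp only [(hL _).map_one, tendsto_const_nhds])
  · refine fun q _ => ge_of_tendsto (hL' (q * q)) ?_
    filter_upwards [hr.eventually_ge_atTop q.totalDegree] with k hk
    exact (hL k).mul_self_nonneg q hk

end Theta

section Relaxation

variable {n m r : ℕ} {g : Fin m → MvPolynomial (Fin n) ℝ} {f : MvPolynomial (Fin n) ℝ}
  {y : (Fin n →₀ ℕ) → ℝ}

/-- `y` is a feasible point of the relaxation `𝒬_{εr}`. -/
structure IsFeasible (g : Fin m → MvPolynomial (Fin n) ℝ) (r : ℕ) (y : (Fin n →₀ ℕ) → ℝ) :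
    Prop where
  apply_zero : y 0 = 1
  posSemidef : (momentMatrix n r y).PosSemidef
  Ly_sq_nonpos : ∀ j, Ly y (g j ^ 2) ≤ 0

theorem Ly_eq_momentFunctional (y : (Fin n →₀ ℕ) → ℝ) (p : MvPolynomial (Fin n) ℝ) :
    Ly y p = momentFunctional y p := by
  simp only [Ly, ← sum_coeff_mul_apply_monomial (momentFunctional y) p, momentFunctional_monomial]

theorem mem_degLE {α : Fin n →₀ ℕ} : α ∈ degLE n r ↔ α.degree ≤ r := by
  rw [degLE, Finset.mem_filter, Finset.mem_Iic]
  exact and_iff_right_of_imp fun h i => (Finsupp.le_degree i α).trans h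

theorem dotProduct_momentMatrix_mulVec (y : (Fin n →₀ ℕ) → ℝ) {q : MvPolynomial (Fin n) ℝ}
    (hq : q.totalDegree ≤ r) :
    (fun α : degLE n r => coeff α.1 q) ⬝ᵥ
      (momentMatrix n r y).mulVec (fun α : degLE n r => coeff α.1 q) =
      momentFunctional y (q * q) := by
  have hq_sum : ∑ α : degLE n r, monomial α.1 (coeff α.1 q) = q := by
    rw [Finset.sum_coe_sort (degLE n r) fun α => monomial α (coeff α q)]
    conv_rhs => rw [← support_sum_monomial_coeff q]
    refine (Finset.sum_subset (fun α hα => mem_degLE.2 ((le_totalDegree hα).trans hq))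
      fun α _ hα => ?_).symm
    rw [notMem_support_iff.1 hα, map_zero]
  conv_rhs => rw [← hq_sum, Finset.sum_mul_sum]
  simp only [dotProduct, Matrix.mulVec, Finset.mul_sum, momentMatrix, monomial_mul, map_sum,
    apply_monomial (momentFunctional y) _ (_ * _), momentFunctional_monomial]
  exact Finset.sum_congr rfl fun α _ => Finset.sum_congr rfl fun β _ => by ring

theorem IsFeasible.isPseudoExpectation (hy : IsFeasible g r y) :
    IsPseudoExpectation (momentFunctional y) r where
  map_one := (momentFunctional_monomial y 0).trans hy.apply_zero
  mul_self_nonneg q hq := by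
    rw [← dotProduct_momentMatrix_mulVec y hq]
    exact hy.posSemidef.dotProduct_mulVec_nonneg _

theorem Ly_eval_monomial (x : Fin n → ℝ) (p : MvPolynomial (Fin n) ℝ) :
    Ly (fun α => eval x (monomial α 1)) p = eval x p :=
  sum_coeff_mul_apply_monomial (aeval x : MvPolynomial (Fin n) ℝ →ₐ[ℝ] ℝ).toLinearMap p

theorem isFeasible_eval_monomial {x : Fin n → ℝ} (hx : ∀ j, eval x (g j) = 0) (r : ℕ) :
    IsFeasible g r fun α => eval x (monomial α 1) where
  apply_zero := map_one (eval x)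
  posSemidef := by
    convert Matrix.posSemidef_vecMulVec_self_star
      fun α : degLE n r => eval x (monomial α.1 (1 : ℝ)) using 1
    ext α β
    rw [momentMatrix, Matrix.vecMulVec_apply, Pi.star_apply, star_trivial, ← map_mul,
      monomial_mul, mul_one]
  Ly_sq_nonpos j := by
    rw [Ly_eval_monomial, map_pow, hx j, sq, mul_zero]

theorem le_apply_of_forall_le_eval_variety {L : MvPolynomial (Fin n) ℝ →ₗ[ℝ] ℝ}
    (hgrowth : HasGaussianGrowth L) (hL : ∀ d, IsPseudoExpectation L d)
    (hg : ∀ j, L (g j ^ 2) ≤ 0) {c : ℝ}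
    (hc : ∀ x, (∀ j, eval x (g j) = 0) → c ≤ eval x f) : c ≤ L f := by
  have hG : ∀ x, eval x (∑ j, g j ^ 2) = ∑ j, eval x (g j) ^ 2 := fun x => by
    simp only [map_sum, map_pow]
  refine le_apply_of_forall_le_eval hgrowth (fun q => (hL _).mul_self_nonneg q le_rfl)
    (hL 0).map_one (G := ∑ j, g j ^ 2) (fun x => ?_) ?_ fun x hx => hc x fun j => ?_
  · rw [hG]
    positivity
  · rw [map_sum]
    exact Finset.sum_nonpos fun j _ => hg j
  · rw [hG, Finset.sum_eq_zero_iff_of_nonneg fun _ _ => sq_nonneg _] at hx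
    exact sq_eq_zero_iff.1 (hx j (Finset.mem_univ j))

theorem exists_forall_isFeasible_le [NeZero n] {c : ℝ}
    (hc : ∀ x, (∀ j, eval x (g j) = 0) → c ≤ eval x f) {ε : ℝ} (hε : 0 < ε) :
    ∃ r₀, ∀ r ≥ r₀, ∀ y, IsFeasible g r y → c ≤ Ly y (f + C ε * theta n r) := by
  by_contra! hcon
  simp only [Ly_eq_momentFunctional] at hcon
  choose r hr y hy hlt using hcon
  obtain ⟨B, hB⟩ := exists_apply_theta_le f hε c
  have hr_lim : Tendsto r (hyperfilter ℕ) atTop :=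
    (tendsto_atTop_mono hr tendsto_id).mono_left Nat.hyperfilter_le_atTop
  have hL := fun k => (hy k).isPseudoExpectation
  obtain ⟨L, hlim, hgrowth, hL_lim⟩ := exists_tendsto_isPseudoExpectation hr_lim hL
    ((hr_lim.eventually_ge_atTop _).mono fun k hk => hB _ hk _ (hL k) (hlt k))
  have hg : ∀ j, L (g j ^ 2) ≤ 0 := fun j => le_of_tendsto' (hlim _) fun k =>
    (Ly_eq_momentFunctional _ _).symm.trans_le ((hy k).Ly_sq_nonpos j)
  have hLf : L f ≤ c - ε * n := le_of_tendsto' (hlim f) fun k => by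
    have h := hlt k
    rw [map_add, ← smul_eq_C_mul, map_smul, smul_eq_mul] at h
    have hn := mul_le_mul_of_nonneg_left (hL k).natCast_le_apply_theta hε.le
    linarith
  have hc_le := le_apply_of_forall_le_eval_variety hgrowth hL_lim hg hc
  have hεn : 0 < ε * n := mul_pos hε (Nat.cast_pos.2 (NeZero.pos n))
  linarith

theorem infQ_eq_sInf_image (g : Fin m → MvPolynomial (Fin n) ℝ) (f : MvPolynomial (Fin n) ℝ)
    (ε : ℝ) (r : ℕ) :
    infQ n m g f ε r = sInf ((fun y => Ly y (f + C ε * theta n r)) '' {y | IsFeasible g r y}) := by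
  refine congrArg sInf (Set.ext fun v => ⟨?_, ?_⟩)
  · rintro ⟨y, h0, hpsd, hg, rfl⟩
    exact ⟨y, ⟨h0, hpsd, hg⟩, rfl⟩
  · rintro ⟨y, ⟨h0, hpsd, hg⟩, rfl⟩
    exact ⟨y, h0, hpsd, hg, rfl⟩

theorem infQ_mem_Icc {c ε : ℝ} (hc : ∀ y, IsFeasible g r y → c ≤ Ly y (f + C ε * theta n r))
    {x : Fin n → ℝ} (hx : ∀ j, eval x (g j) = 0) :
    infQ n m g f ε r ∈ Set.Icc c (eval x f + ε * eval x (theta n r)) := by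
  have hmem : eval x f + ε * eval x (theta n r) ∈
      (fun y => Ly y (f + C ε * theta n r)) '' {y | IsFeasible g r y} :=
    ⟨_, isFeasible_eval_monomial hx r, by simp [Ly_eval_monomial]⟩
  have hlower : c ∈ lowerBounds
      ((fun y => Ly y (f + C ε * theta n r)) '' {y | IsFeasible g r y}) :=
    Set.forall_mem_image.2 hc
  rw [infQ_eq_sInf_image]
  exact ⟨le_csInf ⟨_, hmem⟩ hlower, csInf_le ⟨c, hlower⟩ hmem⟩

theorem eval_theta_le {x : Fin n → ℝ} {ρ : ℝ} (hρ : ‖x‖ ≤ ρ) (r : ℕ) :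
    eval x (theta n r) ≤ n * Real.exp (ρ ^ 2) :=
  calc eval x (theta n r) = ∑ i, ∑ k ∈ Finset.range (r + 1), (x i ^ 2) ^ k / k.factorial := by
        rw [theta, Finset.sum_comm]
        simp [pow_mul, div_eq_inv_mul]
    _ ≤ ∑ _i : Fin n, Real.exp (ρ ^ 2) := Finset.sum_le_sum fun i _ =>
        (Real.sum_le_exp_of_nonneg (sq_nonneg _) _).trans <| Real.exp_le_exp.2 <|
          sq_le_sq.2 (((norm_le_pi_norm x i).trans hρ).trans (le_abs_self ρ))
    _ = n * Real.exp (ρ ^ 2) := by simp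

end Relaxation

theorem SDP_relaxation_a_priori_error_bound (n m : ℕ)
    (g : Fin m → MvPolynomial (Fin n) ℝ) (f : MvPolynomial (Fin n) ℝ)
    (xstar : Fin n → ℝ) (hxV : ∀ j, eval xstar (g j) = 0)
    (hmin : ∀ x : Fin n → ℝ, (∀ j, eval x (g j) = 0) → eval xstar f ≤ eval x f)
    (fstar : ℝ) (hfstar : fstar = eval xstar f)
    (ρ : ℝ) (hρ : ‖xstar‖ ≤ ρ)
    (η : ℝ) (hη : 0 < η)
    (ε : ℝ) (hε : 0 < ε) (hεle : ε ≤ η * ((n : ℝ) * Real.exp (ρ ^ 2))⁻¹) :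
    ∃ r₀ : ℕ, ∀ r : ℕ, r₀ ≤ r →
      f.totalDegree ≤ 2 * r → (∀ j, ((g j) ^ 2).totalDegree ≤ 2 * r) →
      fstar ≤ infQ n m g f ε r ∧ infQ n m g f ε r ≤ fstar + η := by
  have : NeZero n := ⟨by
    rintro rfl
    rw [Nat.cast_zero, zero_mul, inv_zero, mul_zero] at hεle
    exact hε.not_ge hεle⟩
  have hn : (0 : ℝ) < n * Real.exp (ρ ^ 2) :=
    mul_pos (Nat.cast_pos.2 (NeZero.pos n)) (Real.exp_pos _)
  rw [← div_eq_mul_inv, le_div_iff₀ hn] at hεle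
  obtain ⟨r₀, hr₀⟩ := exists_forall_isFeasible_le (hfstar ▸ hmin) hε
  refine ⟨r₀, fun r hr _ _ => ?_⟩
  obtain ⟨hlower, hupper⟩ := infQ_mem_Icc (hr₀ r hr) hxV
  refine ⟨hlower, hupper.trans ?_⟩
  calc eval xstar f + ε * eval xstar (theta n r)
      ≤ fstar + ε * (n * Real.exp (ρ ^ 2)) := by
        rw [hfstar]
        gcongr
        exact eval_theta_le hρ r
    _ ≤ fstar + η := by gcongr
end
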